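/- arXiv:2401.11251 — 2 statements merged into one kernel-verified Lean document; each statement's English description precedes it below -/
import Mathlib

section
/- Let ω be a non-quasianalytic weight function (i.e. ∫_1^∞ ω(t)/t² dt < ∞) and let σ be a general weight function. Then σ(t)=o(ω(t)) as t→∞ if and only if S_{{ω}}(ℝ^d) ⊆ S_{(σ)}(ℝ^d) for all dimensions d∈ℕ; the implication from σ=o(ω) to the inclusions holds for arbitrary general weight functions, and for the converse only the inclusion in dimension d=1 is required. -/
/-!
The duality between `ω` and its weights `W^{(l)}_m = exp (φ*_ω(l m) / l)` reads
`y^m e^{-ω(y)/l} ≤ W^{(l)}_m` for `y ≥ 1` (`pow_mul_exp_le_wWeight`) and, up to a factor `x`,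
`inf_m W^{(l)}_m x^{-m} ≤ e^{-ω(x)/l}` (`le_of_forall_pow_mul_le`, by convexity of `t ↦ ω(e^t)`).

If `σ = o(ω)`, then `σ ≤ (μ/l) ω + B`, and taking Young conjugates shows that every weight of `ω`
is dominated by every weight of `σ`; the inclusion of the classes is immediate.

For the converse it suffices to exhibit one function `f ∈ S_{{ω}}(ℝ)` that does not decay faster
than `e^{-ω(4t)}`. With the Gaussian `G(y) = e^{-y²/2}`, take
`f(t) = ∑ₖ e^{-ω(2k+1)} G(t - k)`, the sum over natural numbers `k`.
All terms are positive, so the term `k = ⌊t⌋` gives the lower bound (`le_bumpSum`). The bound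
`|y|^a |G⁽ⁿ⁾(y)| ≤ 2^n √((a+n)!)`, condition `(β)` and supermultiplicativity of the weights give
`f ∈ S_{{ω}}(ℝ)` (`bumpSum_mem_roumieu`). If `f ∈ S_{(σ)}(ℝ)`, then the duality for `σ` yields
`σ(t) ≤ μ (ω(4t) + log t + C_μ)` for every `μ > 0` and `t > 1`, and `(α)` and `(γ)` turn this into
`σ = o(ω)`.
-/

open Filter Asymptotics

noncomputable section

/-- Partial derivative operator in coordinate `i`. -/
def pderivOp {d : ℕ} (i : Fin d) (f : (Fin d → ℝ) → ℝ) : (Fin d → ℝ) → ℝ :=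
  fun x => fderiv ℝ f x (Pi.single i 1)

/-- Iterated partial derivative `∂^β f` for a multi-index `β`. -/
def mderiv {d : ℕ} (β : Fin d → ℕ) (f : (Fin d → ℝ) → ℝ) : (Fin d → ℝ) → ℝ :=
  (List.finRange d).foldr (fun i g => (pderivOp i)^[β i] g) f

/-- The monomial `x^α` for a multi-index `α`. -/
def mpow {d : ℕ} (x : Fin d → ℝ) (α : Fin d → ℕ) : ℝ := ∏ i, x i ^ α i

/-- The length `|α| = α 0 + ⋯ + α (d-1)` of a multi-index. -/
def msize {d : ℕ} (α : Fin d → ℕ) : ℕ := ∑ i, α i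

/-- Young conjugate `φ*_ω(s) = sup_{t ≥ 0} (s·t − ω(e^t))`. -/
def youngConj (ω : ℝ → ℝ) (s : ℝ) : ℝ :=
  sSup {y : ℝ | ∃ t : ℝ, 0 ≤ t ∧ y = s * t - ω (Real.exp t)}

/-- A general weight function: continuous, increasing, `ω:[0,∞)→[0,∞)`, with
conditions (α), (γ), (δ) (condition (β) is not required). -/
structure IsGenWeightFun (ω : ℝ → ℝ) : Prop where
  nonneg : ∀ t, 0 ≤ t → 0 ≤ ω t
  continuous : ContinuousOn ω (Set.Ici 0)
  mono : MonotoneOn ω (Set.Ici 0)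
  alpha : ∃ L : ℝ, 1 ≤ L ∧ ∀ t, 0 ≤ t → ω (2 * t) ≤ L * (ω t + 1)
  gamma : Real.log =o[Filter.atTop] ω
  delta : ConvexOn ℝ (Set.Ici 0) fun t => ω (Real.exp t)

/-- A weight function: a general weight function which moreover satisfies
(β): `ω(t) = O(t²)` as `t → ∞`. -/
structure IsWeightFun (ω : ℝ → ℝ) extends IsGenWeightFun ω : Prop where
  beta : ω =O[Filter.atTop] fun t : ℝ => t ^ 2

/-- The weight `exp((1/l)·φ*_ω(l·k))`. -/
def wWeight (ω : ℝ → ℝ) (l : ℝ) (k : ℕ) : ℝ :=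
  Real.exp (1 / l * youngConj ω (l * (k : ℝ)))

/-- Roumieu Gelfand–Shilov class `S_{{ω}}(ℝ^d)`. -/
def SRoumieuW (ω : ℝ → ℝ) (d : ℕ) : Set ((Fin d → ℝ) → ℝ) :=
  {f | ContDiff ℝ (⊤ : ℕ∞) f ∧ ∃ l > 0, ∃ C > 0, ∀ α β : Fin d → ℕ, ∀ x : Fin d → ℝ,
    |mpow x α * mderiv β f x| ≤ C * wWeight ω l (msize α + msize β)}

/-- Beurling Gelfand–Shilov class `S_{(ω)}(ℝ^d)`. -/
def SBeurlingW (ω : ℝ → ℝ) (d : ℕ) : Set ((Fin d → ℝ) → ℝ) :=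
  {f | ContDiff ℝ (⊤ : ℕ∞) f ∧ ∀ l > 0, ∃ C > 0, ∀ α β : Fin d → ℕ, ∀ x : Fin d → ℝ,
    |mpow x α * mderiv β f x| ≤ C * wWeight ω l (msize α + msize β)}

/-- Continuity of the inclusion `S_(ω)(ℝ^d) ⊆ S_(σ)(ℝ^d)`: for every `μ > 0` there are
`ν > 0` and `C ≥ 1` with `q_{σ,μ}(f) ≤ C · q_{ω,ν}(f)` for all `f ∈ S_(ω)(ℝ^d)`,
expressed via bounding constants. -/
def contIncBW (ω σ : ℝ → ℝ) (d : ℕ) : Prop :=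
  ∀ μ > 0, ∃ ν > 0, ∃ C : ℝ, 1 ≤ C ∧ ∀ f ∈ SBeurlingW ω d, ∀ D : ℝ, 0 ≤ D →
    (∀ α β : Fin d → ℕ, ∀ x : Fin d → ℝ,
      |mpow x α * mderiv β f x| ≤ D * wWeight ω ν (msize α + msize β)) →
    (∀ α β : Fin d → ℕ, ∀ x : Fin d → ℝ,
      |mpow x α * mderiv β f x| ≤ C * D * wWeight σ μ (msize α + msize β))

/-- `M ∈ LC`: normalized, log-convex, with `M_p^{1/p} → ∞`. -/
structure IsLC (M : ℕ → ℝ) : Prop where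
  pos : ∀ p, 0 < M p
  norm0 : M 0 = 1
  norm1 : 1 ≤ M 1
  logConvex : ∀ p : ℕ, M (p + 1) ^ 2 ≤ M p * M (p + 2)
  root_tendsto : Filter.Tendsto (fun p : ℕ => M p ^ (1 / (p : ℝ))) Filter.atTop Filter.atTop

/-- `M ⪯ N`: `∃ C ≥ 1, ∀ p, M_p ≤ C^p N_p`. -/
def seqPreceq (M N : ℕ → ℝ) : Prop := ∃ C : ℝ, 1 ≤ C ∧ ∀ p : ℕ, M p ≤ C ^ p * N p

/-- `M ◁ N`: `(M_p/N_p)^{1/p} → 0`. -/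
def seqLtriangle (M N : ℕ → ℝ) : Prop :=
  Filter.Tendsto (fun p : ℕ => (M p / N p) ^ (1 / (p : ℝ))) Filter.atTop (nhds 0)

/-- `‖f‖_{∞,M,h} ≤ C`, expressed pointwise. -/
def seqBound {d : ℕ} (M : ℕ → ℝ) (h C : ℝ) (f : (Fin d → ℝ) → ℝ) : Prop :=
  ∀ α β : Fin d → ℕ, ∀ x : Fin d → ℝ,
    |mpow x α * mderiv β f x| ≤ C * h ^ (msize α + msize β) * M (msize α + msize β)

/-- Roumieu class `S_{{M}}(ℝ^d)` for a single weight sequence. -/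
def SRoumieuSeq (M : ℕ → ℝ) (d : ℕ) : Set ((Fin d → ℝ) → ℝ) :=
  {f | ContDiff ℝ (⊤ : ℕ∞) f ∧ ∃ C > 0, ∃ h > 0, seqBound M h C f}

/-- Beurling class `S_(M)(ℝ^d)` for a single weight sequence. -/
def SBeurlingSeq (M : ℕ → ℝ) (d : ℕ) : Set ((Fin d → ℝ) → ℝ) :=
  {f | ContDiff ℝ (⊤ : ℕ∞) f ∧ ∀ h > 0, ∃ C > 0, seqBound M h C f}

/-- Moderate growth (M2). -/
def condM2 (M : ℕ → ℝ) : Prop := ∃ C : ℝ, 1 ≤ C ∧ ∀ p q : ℕ, M (p + q) ≤ C ^ (p + q) * M p * M q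

/-- Derivation closedness (M2'). -/
def condM2' (M : ℕ → ℝ) : Prop := ∃ D : ℝ, 1 ≤ D ∧ ∀ p : ℕ, M (p + 1) ≤ D ^ (p + 1) * M p

/-- Condition (12L2R) for a single sequence. -/
def cond12L2Rseq (M : ℕ → ℝ) : Prop :=
  ∃ B > 0, ∃ C > 0, ∃ H > 0, ∀ p q : ℕ,
    (p : ℝ) ^ ((p : ℝ) / 2) * M q ≤ B * C ^ p * H ^ (p + q) * M (p + q)

/-- Condition (12L2B) for a single sequence. -/
def cond12L2Bseq (M : ℕ → ℝ) : Prop :=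
  ∃ H > 0, ∀ C > 0, ∃ B > 0, ∀ p q : ℕ,
    (p : ℝ) ^ ((p : ℝ) / 2) * M q ≤ B * C ^ p * H ^ (p + q) * M (p + q)

/-- Non-quasianalyticity of a weight sequence: `∑ M_{p-1}/M_p < ∞`. -/
def nonQA (M : ℕ → ℝ) : Prop := Summable fun p : ℕ => M p / M (p + 1)

/-- Continuity of the inclusion `S_(M)(ℝ^d) ⊆ S_(N)(ℝ^d)` for single sequences. -/
def contIncBSeq (M N : ℕ → ℝ) (d : ℕ) : Prop :=
  ∀ h > 0, ∃ h' > 0, ∃ C : ℝ, 1 ≤ C ∧ ∀ f ∈ SBeurlingSeq M d, ∀ D : ℝ, 0 ≤ D →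
    seqBound M h' D f → seqBound N h (C * D) f

/-- A weight matrix: positive normalized sequences, pointwise nondecreasing in the index. -/
def IsWeightMatrix (M : ℝ → ℕ → ℝ) : Prop :=
  (∀ l, 0 < l → (∀ p, 0 < M l p) ∧ M l 0 = 1) ∧
    ∀ l k, 0 < l → l ≤ k → ∀ p, M l p ≤ M k p

/-- Standard log-convexity of a weight matrix. -/
def StdLogConvex (M : ℝ → ℕ → ℝ) : Prop := ∀ l, 0 < l → IsLC (M l)

/-- Roumieu class `S_{{𝓜}}(ℝ^d)` for a weight matrix. -/
def SRoumieuMat (M : ℝ → ℕ → ℝ) (d : ℕ) : Set ((Fin d → ℝ) → ℝ) :=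
  {f | ∃ l > 0, f ∈ SRoumieuSeq (M l) d}

/-- Beurling class `S_(𝓜)(ℝ^d)` for a weight matrix. -/
def SBeurlingMat (M : ℝ → ℕ → ℝ) (d : ℕ) : Set ((Fin d → ℝ) → ℝ) :=
  {f | ∀ l > 0, f ∈ SBeurlingSeq (M l) d}

/-- `𝓜{⪯}𝓝`. -/
def matPreceqR (M N : ℝ → ℕ → ℝ) : Prop := ∀ l > 0, ∃ k > 0, seqPreceq (M l) (N k)

/-- `𝓜(⪯)𝓝`. -/
def matPreceqB (M N : ℝ → ℕ → ℝ) : Prop := ∀ l > 0, ∃ k > 0, seqPreceq (M k) (N l)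

/-- `𝓜 ◁ 𝓝`. -/
def matLtriangle (M N : ℝ → ℕ → ℝ) : Prop := ∀ l > 0, ∀ k > 0, seqLtriangle (M l) (N k)

/-- Condition (12L2R) for a weight matrix (Roumieu). -/
def cond12L2RMat (M : ℝ → ℕ → ℝ) : Prop :=
  ∀ l > 0, ∃ k, l ≤ k ∧ ∃ B > 0, ∃ C > 0, ∃ H > 0, ∀ p q : ℕ,
    (p : ℝ) ^ ((p : ℝ) / 2) * M l q ≤ B * C ^ p * H ^ (p + q) * M k (p + q)

/-- Condition (M2')_R for a weight matrix (Roumieu). -/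
def condM2'RMat (M : ℝ → ℕ → ℝ) : Prop :=
  ∀ l > 0, ∃ k, l ≤ k ∧ ∃ A : ℝ, 1 ≤ A ∧ ∀ p : ℕ, M l (p + 1) ≤ A ^ (p + 1) * M k p

/-- Condition (12L2B) for a weight matrix (Beurling). -/
def cond12L2BMat (M : ℝ → ℕ → ℝ) : Prop :=
  ∀ l > 0, ∃ k, 0 < k ∧ k ≤ l ∧ ∃ H > 0, ∀ C > 0, ∃ B > 0, ∀ p q : ℕ,
    (p : ℝ) ^ ((p : ℝ) / 2) * M k q ≤ B * C ^ p * H ^ (p + q) * M l (p + q)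

/-- Condition (M2')_B for a weight matrix (Beurling). -/
def condM2'BMat (M : ℝ → ℕ → ℝ) : Prop :=
  ∀ l > 0, ∃ k, 0 < k ∧ k ≤ l ∧ ∃ A : ℝ, 1 ≤ A ∧ ∀ p : ℕ, M k (p + 1) ≤ A ^ (p + 1) * M l p

/-- Continuity of the inclusion `S_(𝓜)(ℝ^d) ⊆ S_(𝓝)(ℝ^d)` for weight matrices. -/
def contIncBMat (M N : ℝ → ℕ → ℝ) (d : ℕ) : Prop :=
  ∀ l > 0, ∀ h > 0, ∃ k > 0, ∃ h' > 0, ∃ C : ℝ, 1 ≤ C ∧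
    ∀ f ∈ SBeurlingMat M d, ∀ D : ℝ, 0 ≤ D →
      seqBound (M k) h' D f → seqBound (N l) h (C * D) f

/-- Associated function `ω_M(t) = sup_p log(t^p / M_p)`. -/
def assocFun (M : ℕ → ℝ) (t : ℝ) : ℝ :=
  sSup {y : ℝ | ∃ p : ℕ, y = Real.log (t ^ p / M p)}

/-- Condition (α) for a function. -/
def condAlpha (ω : ℝ → ℝ) : Prop := ∃ L : ℝ, 1 ≤ L ∧ ∀ t, 0 ≤ t → ω (2 * t) ≤ L * (ω t + 1)

/-- Condition (ω6): `∃ H ≥ 1, ∀ t ≥ 0, 2ω(t) ≤ ω(Ht) + H`. -/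
def condOmega6 (ω : ℝ → ℝ) : Prop := ∃ H : ℝ, 1 ≤ H ∧ ∀ t, 0 ≤ t → 2 * ω t ≤ ω (H * t) + H

/-- The sequence `W^{(λ)}_p = exp((1/λ)φ*_ω(λ p))`. -/
def wSeq (ω : ℝ → ℝ) (l : ℝ) (p : ℕ) : ℝ := Real.exp (1 / l * youngConj ω (l * (p : ℝ)))

end

/-! ### The Young conjugate and the weights -/

lemma youngConj_bddAbove {ω : ℝ → ℝ} (hω : IsGenWeightFun ω) {s : ℝ} (hs : 0 ≤ s) :
    BddAbove {y : ℝ | ∃ t : ℝ, 0 ≤ t ∧ y = s * t - ω (Real.exp t)} := by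
  have h := hω.gamma.def (c := 1 / (s + 1)) (by positivity)
  obtain ⟨X, hX⟩ := eventually_atTop.1 h
  refine ⟨s * |X|, ?_⟩
  rintro y ⟨t, ht, rfl⟩
  have hn : 0 ≤ ω (Real.exp t) := hω.nonneg _ (Real.exp_pos t).le
  have hXa := le_abs_self X
  rcases le_total X (Real.exp t) with h1 | h1
  · have h2 := hX _ h1
    rw [Real.log_exp, Real.norm_of_nonneg ht, Real.norm_of_nonneg hn, one_div,
      inv_mul_eq_div, le_div_iff₀ (by positivity)] at h2
    have : 0 ≤ s * |X| := by positivity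
    nlinarith
  · have h2 : t ≤ |X| := by linarith [Real.add_one_le_exp t]
    have := mul_le_mul_of_nonneg_left h2 hs
    linarith

lemma le_youngConj {ω : ℝ → ℝ} (hω : IsGenWeightFun ω) {s t : ℝ} (hs : 0 ≤ s) (ht : 0 ≤ t) :
    s * t - ω (Real.exp t) ≤ youngConj ω s :=
  le_csSup (youngConj_bddAbove hω hs) ⟨t, ht, rfl⟩

lemma youngConj_le {ω : ℝ → ℝ} {s B : ℝ} (h : ∀ t, 0 ≤ t → s * t - ω (Real.exp t) ≤ B) :
    youngConj ω s ≤ B := by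
  refine csSup_le ⟨_, 0, le_rfl, rfl⟩ ?_
  rintro y ⟨t, ht, rfl⟩
  exact h t ht

/-- One half of the duality between the weights and `ω`: `y^m e^{-ω(y)/l} ≤ W^{(l)}_m`. -/
lemma pow_mul_exp_le_wWeight {ω : ℝ → ℝ} (hω : IsGenWeightFun ω) {l : ℝ} (hl : 0 < l) (m : ℕ)
    {y : ℝ} (hy : 1 ≤ y) : y ^ m * Real.exp (-(ω y / l)) ≤ wWeight ω l m := by
  have hy0 : 0 < y := by linarith
  have h := le_youngConj hω (s := l * m) (by positivity) (Real.log_nonneg hy)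
  rw [Real.exp_log hy0] at h
  rw [← Real.rpow_natCast, Real.rpow_def_of_pos hy0, ← Real.exp_add, wWeight]
  refine Real.exp_le_exp.2 ?_
  rw [one_div, inv_mul_eq_div, le_div_iff₀ hl, add_mul, neg_mul, div_mul_cancel₀ _ hl.ne']
  linarith

/-- The weights are supermultiplicative, since `ω ≥ 0`. -/
lemma wWeight_mul_le {ω : ℝ → ℝ} (hω : IsGenWeightFun ω) {l : ℝ} (hl : 0 < l) (a b : ℕ) :
    wWeight ω l a * wWeight ω l b ≤ wWeight ω l (a + b) := by
  unfold wWeight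
  rw [← Real.exp_add, ← mul_add]
  refine Real.exp_le_exp.2 (mul_le_mul_of_nonneg_left ?_ (by positivity))
  have key : ∀ u, 0 ≤ u → ∀ v, 0 ≤ v →
      (l * a * u - ω (Real.exp u)) + (l * b * v - ω (Real.exp v))
        ≤ youngConj ω (l * ((a + b : ℕ) : ℝ)) := by
    intro u hu v hv
    have ha : (0 : ℝ) ≤ l * a := by positivity
    have hb : (0 : ℝ) ≤ l * b := by positivity
    have hnu := hω.nonneg _ (Real.exp_pos u).le
    have hnv := hω.nonneg _ (Real.exp_pos v).le
    have hs : (0 : ℝ) ≤ l * ((a + b : ℕ) : ℝ) := by positivity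
    rcases le_total u v with huv | huv
    · have h := le_youngConj hω hs hv
      push_cast at h ⊢
      have := mul_le_mul_of_nonneg_left huv ha
      linarith
    · have h := le_youngConj hω hs hu
      push_cast at h ⊢
      have := mul_le_mul_of_nonneg_left huv hb
      linarith
  have h1 : ∀ v, 0 ≤ v → youngConj ω (l * a) ≤
      youngConj ω (l * ((a + b : ℕ) : ℝ)) - (l * b * v - ω (Real.exp v)) := by
    intro v hv
    refine youngConj_le fun u hu => ?_
    linarith [key u hu v hv]
  have h2 : youngConj ω (l * b) ≤ youngConj ω (l * ((a + b : ℕ) : ℝ)) - youngConj ω (l * a) :=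
    youngConj_le fun v hv => by linarith [h1 v hv]
  linarith

lemma wWeight_pos (ω : ℝ → ℝ) (l : ℝ) (m : ℕ) : 0 < wWeight ω l m := Real.exp_pos _

/-! ### Sufficiency of `σ = o(ω)` -/

/-- If `σ = o(ω)`, every weight of `ω` is dominated by every weight of `σ`:
`σ ≤ (μ/l) ω + B` on `[1, ∞)` dualizes to `φ*_σ(μ s) ≥ (μ/l) φ*_ω(l s) - B`. -/
lemma wWeight_le_of_isLittleO {ω σ : ℝ → ℝ} (hω : IsGenWeightFun ω) (hσ : IsGenWeightFun σ)
    (h : σ =o[atTop] ω) {l μ : ℝ} (hl : 0 < l) (hμ : 0 < μ) :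
    ∃ C > 0, ∀ m : ℕ, wWeight ω l m ≤ C * wWeight σ μ m := by
  obtain ⟨X, hX⟩ := eventually_atTop.1 (h.def (c := μ / l) (by positivity))
  have hB : ∀ x, 0 ≤ x → σ x ≤ μ / l * ω x + σ |X| := by
    intro x hx
    have hn := hω.nonneg x hx
    have hX0 := hσ.nonneg |X| (abs_nonneg X)
    rcases le_total X x with h1 | h1
    · have h2 := hX x h1
      rw [Real.norm_of_nonneg hn, Real.norm_of_nonneg (hσ.nonneg x hx)] at h2
      linarith
    · have h2 := hσ.mono hx (abs_nonneg X) (h1.trans (le_abs_self X))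
      have : 0 ≤ μ / l * ω x := by positivity
      linarith
  refine ⟨Real.exp (σ |X| / μ), Real.exp_pos _, fun m => ?_⟩
  unfold wWeight
  rw [← Real.exp_add]
  refine Real.exp_le_exp.2 ?_
  have h3 : youngConj ω (l * m) ≤ l / μ * (σ |X| + youngConj σ (μ * m)) := by
    refine youngConj_le fun t ht => ?_
    have h4 := le_youngConj hσ (s := μ * m) (by positivity) ht
    have h5 := hB _ (Real.exp_pos t).le
    have h6 : μ * m * t - μ / l * ω (Real.exp t) ≤ σ |X| + youngConj σ (μ * m) := by linarith
    calc l * m * t - ω (Real.exp t) = l / μ * (μ * m * t - μ / l * ω (Real.exp t)) := by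
          field_simp
      _ ≤ _ := mul_le_mul_of_nonneg_left h6 (by positivity)
  calc 1 / l * youngConj ω (l * m) ≤ 1 / l * (l / μ * (σ |X| + youngConj σ (μ * m))) :=
        mul_le_mul_of_nonneg_left h3 (by positivity)
    _ = _ := by field_simp

lemma roumieu_subset_beurling_of_isLittleO {ω σ : ℝ → ℝ} (hω : IsGenWeightFun ω)
    (hσ : IsGenWeightFun σ) (h : σ =o[atTop] ω) (d : ℕ) : SRoumieuW ω d ⊆ SBeurlingW σ d := by
  rintro f ⟨hf, l, hl, C, hC, hb⟩
  refine ⟨hf, fun μ hμ => ?_⟩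
  obtain ⟨D, hD, hDW⟩ := wWeight_le_of_isLittleO hω hσ h hl hμ
  refine ⟨C * D, by positivity, fun α β x => (hb α β x).trans ?_⟩
  rw [mul_assoc]
  exact mul_le_mul_of_nonneg_left (hDW _) hC.le

/-! ### Decay encoded by the weights -/

lemma exists_subgradient {σ : ℝ → ℝ} (hσ : IsGenWeightFun σ) {T : ℝ} (hT : 0 < T) :
    ∃ s, 0 ≤ s ∧ ∀ u, 0 ≤ u → σ (Real.exp T) + s * (u - T) ≤ σ (Real.exp u) := by
  have hmem : T ∈ interior (Set.Ici (0 : ℝ)) := by rw [interior_Ici]; exact hT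
  set ψ : ℝ → ℝ := fun t => σ (Real.exp t) with hψ
  have hsub : ∀ u, 0 ≤ u → ψ T + derivWithin ψ (Set.Ioi T) T * (u - T) ≤ ψ u := by
    intro u hu
    rcases lt_trichotomy T u with h | rfl | h
    · have := hσ.delta.rightDeriv_le_slope_of_mem_interior hmem hu h
      rw [slope_def_field, le_div_iff₀ (by linarith)] at this
      linarith
    · simp
    · have h1 := hσ.delta.slope_le_leftDeriv_of_mem_interior hu hmem h
      have h2 := hσ.delta.leftDeriv_le_rightDeriv_of_mem_interior hmem
      have := h1.trans h2
      rw [slope_def_field, div_le_iff₀ (by linarith)] at this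
      linarith
  refine ⟨_, ?_, hsub⟩
  have h0 := hsub 0 le_rfl
  have hm : ψ 0 ≤ ψ T := hσ.mono (Real.exp_pos 0).le (Real.exp_pos T).le
    (Real.exp_le_exp.2 hT.le)
  by_contra hneg
  push Not at hneg
  nlinarith

/-- Other half of the duality between the weights and `σ`: a number `v` with
`x^p v ≤ C W^{(μ)}_p` for all `p` is at most `C x e^{-σ(x)/μ}`. The factor `x` is the price for
integer exponents `p`. -/
lemma le_of_forall_pow_mul_le {σ : ℝ → ℝ} (hσ : IsGenWeightFun σ) {μ C x v : ℝ} (hμ : 0 < μ)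
    (hC : 0 < C) (hx : 1 < x) (hv : 0 < v) (h : ∀ p : ℕ, x ^ p * v ≤ C * wWeight σ μ p) :
    σ x ≤ μ * (Real.log x + Real.log C - Real.log v) := by
  have hx0 : 0 < x := by linarith
  have hT : 0 < Real.log x := Real.log_pos hx
  obtain ⟨s, hs, hsub⟩ := exists_subgradient hσ hT
  rw [Real.exp_log hx0] at hsub
  have hp := h ⌊s / μ⌋₊
  have hp1 : μ * (⌊s / μ⌋₊ : ℝ) ≤ s := by
    rw [mul_comm, ← le_div_iff₀ hμ]; exact Nat.floor_le (by positivity)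
  have hp2 : s ≤ μ * ((⌊s / μ⌋₊ : ℝ) + 1) := by
    rw [mul_comm, ← div_le_iff₀ hμ]; exact (Nat.lt_floor_add_one _).le
  generalize ⌊s / μ⌋₊ = p at *
  have hφ : youngConj σ (μ * p) ≤ s * Real.log x - σ x := by
    refine youngConj_le fun u hu => ?_
    have := mul_le_mul_of_nonneg_right hp1 hu
    linarith [hsub u hu]
  have hl := Real.log_le_log (by positivity) hp
  rw [Real.log_mul (by positivity) hv.ne', Real.log_mul hC.ne' (wWeight_pos _ _ _).ne',
    Real.log_pow, wWeight, Real.log_exp] at hl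
  have hl2 := mul_le_mul_of_nonneg_left hl hμ.le
  have e : μ * (Real.log C + 1 / μ * youngConj σ (μ * p))
      = μ * Real.log C + youngConj σ (μ * p) := by field_simp
  rw [e] at hl2
  have := mul_le_mul_of_nonneg_right hp2 hT.le
  linarith

/-! ### Derivatives of the Gaussian -/

/-- The `n`-th derivative of `y ↦ exp (-y²/2)`, given by the Hermite recursion
`G⁽ⁿ⁺²⁾ = -y G⁽ⁿ⁺¹⁾ - (n+1) G⁽ⁿ⁾`. -/
noncomputable def gaussD : ℕ → ℝ → ℝ
  | 0, y => Real.exp (-(y ^ 2 / 2))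
  | 1, y => -y * Real.exp (-(y ^ 2 / 2))
  | (n + 2), y => -y * gaussD (n + 1) y - (n + 1) * gaussD n y

lemma gaussD_hasDerivAt (n : ℕ) (y : ℝ) : HasDerivAt (gaussD n) (gaussD (n + 1) y) y := by
  have h0 : ∀ y, HasDerivAt (gaussD 0) (gaussD 1 y) y := by
    intro y
    have h1 : HasDerivAt (fun y : ℝ => -(y ^ 2 / 2)) (-y) y := by
      have := ((hasDerivAt_pow 2 y).div_const 2).neg
      convert! this using 1
      norm_num
    have := h1.exp
    rw [mul_comm] at this
    exact this
  induction n using Nat.strong_induction_on generalizing y with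
  | _ n ih =>
    match n with
    | 0 => exact h0 y
    | 1 =>
      have := (hasDerivAt_neg y).mul (h0 y)
      refine this.congr_deriv ?_
      simp only [gaussD]
      push_cast
      ring
    | n + 2 =>
      have h1 := ih (n + 1) (by omega) y
      have h2 := ih n (by omega) y
      have := ((hasDerivAt_neg y).mul h1).sub (h2.const_mul ((n : ℝ) + 1))
      refine this.congr_deriv ?_
      simp only [gaussD]
      push_cast
      ring

lemma abs_pow_mul_gauss_le (a : ℕ) (y : ℝ) :
    |y| ^ a * Real.exp (-(y ^ 2 / 2)) ≤ √(a.factorial) := by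
  refine Real.le_sqrt_of_sq_le ?_
  have h := Real.pow_div_factorial_le_exp (y ^ 2) (sq_nonneg y) a
  rw [div_le_iff₀ (by positivity)] at h
  have e : (|y| ^ a * Real.exp (-(y ^ 2 / 2))) ^ 2 = (y ^ 2) ^ a * Real.exp (-(y ^ 2)) := by
    rw [mul_pow, ← pow_mul, mul_comm a 2, pow_mul, sq_abs, ← Real.exp_nat_mul]
    congr 2
    push_cast
    ring
  rw [e]
  calc (y ^ 2) ^ a * Real.exp (-(y ^ 2))
      ≤ Real.exp (y ^ 2) * a.factorial * Real.exp (-(y ^ 2)) :=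
        mul_le_mul_of_nonneg_right h (Real.exp_pos _).le
    _ = a.factorial := by rw [mul_right_comm, ← Real.exp_add]; simp

lemma mul_sqrt_factorial_le (n m : ℕ) (h : n + 1 ≤ m + 1) :
    ((n : ℝ) + 1) * √(m.factorial) ≤ √((m + 2).factorial) := by
  refine Real.le_sqrt_of_sq_le ?_
  rw [mul_pow, Real.sq_sqrt (by positivity), Nat.factorial_succ, Nat.factorial_succ]
  push_cast
  have h' : (n : ℝ) + 1 ≤ m + 1 := by exact_mod_cast h
  rw [← mul_assoc]
  refine mul_le_mul_of_nonneg_right ?_ (by positivity)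
  have : (0 : ℝ) ≤ n := by positivity
  nlinarith

/-- The bound propagates through the Hermite recursion because
`(n+1) √(m!) ≤ √((m+2)!)` for `n ≤ m`. -/
lemma abs_pow_mul_gaussD_le (n a : ℕ) (y : ℝ) :
    |y| ^ a * |gaussD n y| ≤ 2 ^ n * √((a + n).factorial) := by
  have h0 : ∀ a, |y| ^ a * |gaussD 0 y| ≤ √(a.factorial) := by
    intro a
    simp only [gaussD, Real.abs_exp]
    exact abs_pow_mul_gauss_le a y
  induction n using Nat.strong_induction_on generalizing a with
  | _ n ih =>
    match n with
    | 0 => simpa using h0 a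
    | 1 =>
      have h1 := h0 (a + 1)
      simp only [gaussD, Real.abs_exp, abs_mul, abs_neg] at h1 ⊢
      rw [pow_succ, mul_assoc] at h1
      have : (0 : ℝ) ≤ √((a + 1).factorial) := by positivity
      linarith
    | n + 2 =>
      have h1 := ih (n + 1) (by omega) (a + 1)
      have h2 := ih n (by omega) a
      have h3 := mul_sqrt_factorial_le n (a + n) (by omega)
      have e1 : a + 1 + (n + 1) = a + (n + 2) := by ring
      have e2 : a + n + 2 = a + (n + 2) := by ring
      rw [e1] at h1
      rw [e2] at h3
      simp only [gaussD]
      have h4 : |-y * gaussD (n + 1) y - ((n : ℝ) + 1) * gaussD n y|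
          ≤ |y| * |gaussD (n + 1) y| + ((n : ℝ) + 1) * |gaussD n y| := by
        refine (abs_sub _ _).trans (le_of_eq ?_)
        rw [abs_mul, abs_mul, abs_neg, abs_of_nonneg (by positivity : (0 : ℝ) ≤ (n : ℝ) + 1)]
      calc _ ≤ |y| ^ a * (|y| * |gaussD (n + 1) y| + ((n : ℝ) + 1) * |gaussD n y|) :=
            mul_le_mul_of_nonneg_left h4 (by positivity)
        _ = |y| ^ (a + 1) * |gaussD (n + 1) y| + ((n : ℝ) + 1) * (|y| ^ a * |gaussD n y|) := by
            ring
        _ ≤ 2 ^ (n + 1) * √((a + (n + 2)).factorial)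
            + ((n : ℝ) + 1) * (2 ^ n * √((a + n).factorial)) := by gcongr
        _ = 2 ^ (n + 1) * √((a + (n + 2)).factorial)
            + 2 ^ n * (((n : ℝ) + 1) * √((a + n).factorial)) := by ring
        _ ≤ 2 ^ (n + 1) * √((a + (n + 2)).factorial)
            + 2 ^ n * √((a + (n + 2)).factorial) := by gcongr
        _ ≤ 2 ^ (n + 2) * √((a + (n + 2)).factorial) := by
            rw [← add_mul]
            refine mul_le_mul_of_nonneg_right ?_ (by positivity)
            have : (0 : ℝ) < 2 ^ n := by positivity
            rw [show (2 : ℝ) ^ (n + 2) = 4 * 2 ^ n by ring, show (2 : ℝ) ^ (n + 1) = 2 * 2 ^ n by ring]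
            linarith

/-- The Gaussian growth `2^m √(m!)` is admissible for `ω` once `l` is large: this is where `(β)`
enters, through the choice `y = 4 √m` in `y^m e^{-ω(y)/l} ≤ W^{(l)}_m`. -/
lemma two_pow_mul_sqrt_factorial_le {ω : ℝ → ℝ} (hω : IsGenWeightFun ω) {K l : ℝ} (hl : 0 < l)
    (hK : ∀ y, 1 ≤ y → ω y ≤ K * y ^ 2) (hKl : 32 * K ≤ l) (m : ℕ) :
    2 ^ m * √(m.factorial) ≤ 2 * wWeight ω l m := by
  have hexp : ∀ y, 1 ≤ y → Real.exp (-(y ^ 2 / 32)) ≤ Real.exp (-(ω y / l)) := by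
    intro y hy
    refine Real.exp_le_exp.2 (neg_le_neg ?_)
    rw [div_le_iff₀ hl]
    have := hK y hy
    nlinarith [sq_nonneg y]
  rcases Nat.eq_zero_or_pos m with rfl | hm
  · have h1 := pow_mul_exp_le_wWeight hω hl 0 (le_refl (1 : ℝ))
    have h2 := hexp 1 le_rfl
    have h3 := Real.add_one_le_exp (-((1 : ℝ) ^ 2 / 32))
    simp only [pow_zero, one_mul, Nat.factorial_zero, Nat.cast_one, Real.sqrt_one] at *
    linarith
  · have hm1 : (1 : ℝ) ≤ √m := Real.one_le_sqrt.2 (by exact_mod_cast hm)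
    have hy : 1 ≤ 4 * √m := by linarith
    have h1 := pow_mul_exp_le_wWeight hω hl m hy
    have h2 := hexp _ hy
    have e : (4 * √(m : ℝ)) ^ 2 / 32 = m * (1 / 2) := by
      rw [mul_pow, Real.sq_sqrt (by positivity)]; ring
    have h3 : ((1 : ℝ) / 2) ^ m ≤ Real.exp (-((4 * √(m : ℝ)) ^ 2 / 32)) := by
      rw [e, ← mul_neg, Real.exp_nat_mul]
      have := Real.add_one_le_exp (-(1 / 2 : ℝ))
      exact pow_le_pow_left₀ (by norm_num) (by linarith) m
    have h4 : √(m.factorial : ℝ) ≤ √m ^ m := by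
      refine Real.sqrt_le_iff.2 ⟨by positivity, ?_⟩
      rw [← pow_mul, mul_comm, pow_mul, Real.sq_sqrt (by positivity)]
      exact_mod_cast Nat.factorial_le_pow m
    calc 2 ^ m * √(m.factorial : ℝ) ≤ 2 ^ m * √m ^ m := by gcongr
      _ = (4 * √m) ^ m * (1 / 2) ^ m := by
        rw [← mul_pow, ← mul_pow]; congr 1; ring
      _ ≤ (4 * √m) ^ m * Real.exp (-(ω (4 * √m) / l)) := by
        gcongr; exact h3.trans h2
      _ ≤ wWeight ω l m := h1
      _ ≤ 2 * wWeight ω l m := by linarith [wWeight_pos ω l m]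

lemma IsWeightFun.exists_quadratic_bound {ω : ℝ → ℝ} (hω : IsWeightFun ω) :
    ∃ K, 0 < K ∧ ∀ y, 1 ≤ y → ω y ≤ K * y ^ 2 := by
  obtain ⟨K, hK, h⟩ := hω.beta.exists_pos
  obtain ⟨R, hR⟩ := eventually_atTop.1 h.bound
  have hωR := hω.nonneg |R| (abs_nonneg R)
  refine ⟨K + ω |R|, by positivity, fun y hy => ?_⟩
  have hy2 : 1 ≤ y ^ 2 := one_le_pow₀ hy
  rcases le_total R y with h1 | h1
  · have h2 := hR y h1
    rw [Real.norm_of_nonneg (hω.nonneg y (by linarith)), Real.norm_of_nonneg (by positivity)] at h2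
    nlinarith
  · have h2 := hω.mono (show (0 : ℝ) ≤ y by linarith) (abs_nonneg R) (h1.trans (le_abs_self R))
    nlinarith

/-! ### A function of the Roumieu class decaying like `exp (-ω)` -/

lemma summable_exp_neg_half {ω : ℝ → ℝ} (hω : IsGenWeightFun ω) :
    Summable fun k : ℕ => Real.exp (-(ω (2 * k + 1) / 2)) := by
  obtain ⟨X, hX⟩ := eventually_atTop.1 (hω.gamma.def (c := 1 / 4) (by norm_num))
  have hs : Summable fun k : ℕ => ((k : ℝ) ^ 2)⁻¹ :=
    Real.summable_nat_pow_inv.2 (by norm_num)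
  refine summable_of_isBigO_nat hs (IsBigO.of_bound 1 ?_)
  filter_upwards [eventually_ge_atTop ⌈X⌉₊, eventually_ge_atTop 1] with k hk hk1
  have hk' : X ≤ k := (Nat.le_ceil X).trans (by exact_mod_cast hk)
  have hk1' : (1 : ℝ) ≤ k := by exact_mod_cast hk1
  have hk0 : (0 : ℝ) < k := by linarith
  have h := hX (2 * k + 1) (by linarith)
  rw [Real.norm_of_nonneg (Real.log_nonneg (by linarith)),
    Real.norm_of_nonneg (hω.nonneg _ (by linarith))] at h
  have hl : Real.log k ≤ Real.log (2 * k + 1) := Real.log_le_log hk0 (by linarith)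
  rw [Real.norm_of_nonneg (Real.exp_pos _).le, Real.norm_of_nonneg (by positivity), one_mul]
  calc Real.exp (-(ω (2 * k + 1) / 2)) ≤ Real.exp (-(2 * Real.log k)) :=
        Real.exp_le_exp.2 (by linarith)
    _ = ((k : ℝ) ^ 2)⁻¹ := by
        rw [Real.exp_neg, two_mul, Real.exp_add, Real.exp_log hk0, pow_two]

/-- The `n`-th derivative of the superposition `∑ₖ e^{-ω(2k+1)} G(t - k)` of translated
Gaussians. -/
noncomputable def bumpSum (ω : ℝ → ℝ) (n : ℕ) (t : ℝ) : ℝ :=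
  ∑' k : ℕ, Real.exp (-ω (2 * k + 1)) * gaussD n (t - k)

lemma abs_gaussD_le (n : ℕ) (y : ℝ) : |gaussD n y| ≤ 2 ^ n * √(n.factorial) := by
  simpa using abs_pow_mul_gaussD_le n 0 y

lemma abs_bump_term_le {ω : ℝ → ℝ} (hω : IsGenWeightFun ω) (n k : ℕ) (t : ℝ) :
    ‖Real.exp (-ω (2 * k + 1)) * gaussD n (t - k)‖
      ≤ 2 ^ n * √(n.factorial) * Real.exp (-(ω (2 * k + 1) / 2)) := by
  have hn := hω.nonneg (2 * k + 1) (by positivity)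
  rw [norm_mul, Real.norm_of_nonneg (Real.exp_pos _).le, Real.norm_eq_abs, mul_comm]
  have := abs_gaussD_le n (t - k)
  gcongr
  linarith

lemma summable_bump {ω : ℝ → ℝ} (hω : IsGenWeightFun ω) (n : ℕ) (t : ℝ) :
    Summable fun k : ℕ => Real.exp (-ω (2 * k + 1)) * gaussD n (t - k) :=
  .of_norm_bounded ((summable_exp_neg_half hω).mul_left _) fun k => abs_bump_term_le hω n k t

lemma bumpSum_hasDerivAt {ω : ℝ → ℝ} (hω : IsGenWeightFun ω) (n : ℕ) (t : ℝ) :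
    HasDerivAt (bumpSum ω n) (bumpSum ω (n + 1) t) t := by
  refine hasDerivAt_tsum (y₀ := 0)
    (g := fun (k : ℕ) y => Real.exp (-ω (2 * k + 1)) * gaussD n (y - k))
    (g' := fun (k : ℕ) y => Real.exp (-ω (2 * k + 1)) * gaussD (n + 1) (y - k))
    (u := fun k : ℕ => 2 ^ (n + 1) * √((n + 1).factorial) * Real.exp (-(ω (2 * k + 1) / 2)))
    ((summable_exp_neg_half hω).mul_left _)
    (fun k y => ?_) (fun k y => abs_bump_term_le hω (n + 1) k y) (summable_bump hω n 0) t
  exact ((gaussD_hasDerivAt n (y - k)).comp_sub_const y k).const_mul _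

lemma iteratedDeriv_bumpSum {ω : ℝ → ℝ} (hω : IsGenWeightFun ω) (n : ℕ) :
    iteratedDeriv n (bumpSum ω 0) = bumpSum ω n := by
  induction n with
  | zero => simp
  | succ n ih =>
    rw [iteratedDeriv_succ, ih]
    exact funext fun t => (bumpSum_hasDerivAt hω n t).deriv

lemma contDiff_bumpSum {ω : ℝ → ℝ} (hω : IsGenWeightFun ω) :
    ContDiff ℝ (⊤ : ℕ∞) (bumpSum ω 0) := by
  refine contDiff_of_differentiable_iteratedDeriv fun m _ => ?_
  rw [iteratedDeriv_bumpSum hω]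
  exact fun t => (bumpSum_hasDerivAt hω m t).differentiableAt

lemma mderiv_bumpSum {ω : ℝ → ℝ} (hω : IsGenWeightFun ω) (β : Fin 1 → ℕ) :
    mderiv β (fun x : Fin 1 → ℝ => bumpSum ω 0 (x 0)) = fun x => bumpSum ω (β 0) (x 0) := by
  have h : ∀ n, pderivOp (0 : Fin 1) (fun x : Fin 1 → ℝ => bumpSum ω n (x 0))
      = fun x => bumpSum ω (n + 1) (x 0) := by
    intro n
    funext x
    have h1 : HasFDerivAt (fun x : Fin 1 → ℝ => x 0)
        (ContinuousLinearMap.proj (R := ℝ) (φ := fun _ : Fin 1 => ℝ) 0) x :=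
      hasFDerivAt_apply 0 x
    have h2 := (bumpSum_hasDerivAt hω n (x 0)).comp_hasFDerivAt x h1
    unfold pderivOp
    have h3 : fderiv ℝ (fun x : Fin 1 → ℝ => bumpSum ω n (x 0)) x = _ := h2.fderiv
    rw [h3]
    simp
  have hiter : ∀ n, (pderivOp (0 : Fin 1))^[n] (fun x : Fin 1 → ℝ => bumpSum ω 0 (x 0))
      = fun x => bumpSum ω n (x 0) := by
    intro n
    induction n with
    | zero => rfl
    | succ n ih => rw [Function.iterate_succ_apply', ih, h]
  simp only [mderiv, List.finRange_succ, List.finRange_zero, List.map_nil, List.foldr_cons,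
    List.foldr_nil, hiter]

/-- Termwise estimate: `|t| ≤ |t-k| + k`, the power of `|t-k|` is absorbed by the Gaussian and
the power of `2k` by part of `e^{-ω(2k+1)}`. -/
lemma abs_pow_mul_bump_term_le {ω : ℝ → ℝ} (hω : IsGenWeightFun ω) {K l : ℝ} (hl : 2 ≤ l)
    (hK : ∀ y, 1 ≤ y → ω y ≤ K * y ^ 2) (hKl : 32 * K ≤ l) (a n k : ℕ) (t : ℝ) :
    |t| ^ a * (Real.exp (-ω (2 * k + 1)) * |gaussD n (t - k)|)
      ≤ 4 * wWeight ω l (a + n) * Real.exp (-(ω (2 * k + 1) / 2)) := by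
  have hl0 : 0 < l := by linarith
  have hk0 : (0 : ℝ) ≤ k := by positivity
  have hn := hω.nonneg (2 * k + 1) (by positivity)
  have hdiv : ω (2 * k + 1) / l ≤ ω (2 * k + 1) / 2 :=
    div_le_div_of_nonneg_left hn (by norm_num) hl
  have hsplit : Real.exp (-ω (2 * k + 1))
      ≤ Real.exp (-(ω (2 * k + 1) / l)) * Real.exp (-(ω (2 * k + 1) / 2)) := by
    rw [← Real.exp_add]
    exact Real.exp_le_exp.2 (by linarith)
  have hc : Real.exp (-ω (2 * k + 1)) ≤ Real.exp (-(ω (2 * k + 1) / 2)) :=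
    Real.exp_le_exp.2 (by linarith)
  have ht : |t| ^ a ≤ (2 * |t - k|) ^ a + (2 * k + 1) ^ a := by
    have h1 : |t| ≤ |t - k| + k := by
      have := abs_add_le (t - k) k
      rwa [sub_add_cancel, abs_of_nonneg hk0] at this
    have p1 : 0 ≤ (2 * |t - k|) ^ a := by positivity
    have p2 : (0 : ℝ) ≤ (2 * k + 1) ^ a := by positivity
    rcases le_total |t - k| (k : ℝ) with h | h
    · have := pow_le_pow_left₀ (abs_nonneg t) (show |t| ≤ 2 * k + 1 by linarith) a
      linarith
    · have := pow_le_pow_left₀ (abs_nonneg t) (show |t| ≤ 2 * |t - k| by linarith) a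
      linarith
  have b1 : (2 * |t - k|) ^ a * |gaussD n (t - k)| ≤ 2 * wWeight ω l (a + n) := by
    have h1 := abs_pow_mul_gaussD_le n a (t - k)
    have h2 := two_pow_mul_sqrt_factorial_le hω hl0 hK hKl (a + n)
    calc (2 * |t - k|) ^ a * |gaussD n (t - k)|
        = 2 ^ a * (|t - k| ^ a * |gaussD n (t - k)|) := by rw [mul_pow]; ring
      _ ≤ 2 ^ a * (2 ^ n * √((a + n).factorial)) := by gcongr
      _ = 2 ^ (a + n) * √((a + n).factorial) := by rw [pow_add]; ring
      _ ≤ _ := h2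
  have b2 : (2 * (k : ℝ) + 1) ^ a * Real.exp (-(ω (2 * k + 1) / l)) * |gaussD n (t - k)|
      ≤ 2 * wWeight ω l (a + n) := by
    have h1 := pow_mul_exp_le_wWeight hω hl0 a (y := 2 * (k : ℝ) + 1) (by linarith)
    have h2 := (abs_gaussD_le n (t - k)).trans (two_pow_mul_sqrt_factorial_le hω hl0 hK hKl n)
    calc _ ≤ wWeight ω l a * (2 * wWeight ω l n) :=
          mul_le_mul h1 h2 (abs_nonneg _) (wWeight_pos _ _ _).le
      _ = 2 * (wWeight ω l a * wWeight ω l n) := by ring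
      _ ≤ _ := by linarith [wWeight_mul_le hω hl0 a n]
  set E := Real.exp (-(ω (2 * k + 1) / 2))
  have hE : 0 < E := Real.exp_pos _
  set g := |gaussD n (t - k)|
  have hg : 0 ≤ g := abs_nonneg _
  calc |t| ^ a * (Real.exp (-ω (2 * k + 1)) * g)
      ≤ ((2 * |t - k|) ^ a + (2 * k + 1) ^ a) * (Real.exp (-ω (2 * k + 1)) * g) := by gcongr
    _ = (2 * |t - k|) ^ a * g * Real.exp (-ω (2 * k + 1))
        + (2 * k + 1) ^ a * g * Real.exp (-ω (2 * k + 1)) := by ring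
    _ ≤ (2 * |t - k|) ^ a * g * E
        + (2 * k + 1) ^ a * g * (Real.exp (-(ω (2 * k + 1) / l)) * E) := by gcongr
    _ = (2 * |t - k|) ^ a * g * E
        + (2 * k + 1) ^ a * Real.exp (-(ω (2 * k + 1) / l)) * g * E := by ring
    _ ≤ 2 * wWeight ω l (a + n) * E + 2 * wWeight ω l (a + n) * E := by gcongr
    _ = _ := by ring

lemma bumpSum_mem_roumieu {ω : ℝ → ℝ} (hω : IsWeightFun ω) :
    (fun x : Fin 1 → ℝ => bumpSum ω 0 (x 0)) ∈ SRoumieuW ω 1 := by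
  have hg := hω.toIsGenWeightFun
  obtain ⟨K, hK0, hK⟩ := hω.exists_quadratic_bound
  refine ⟨(contDiff_bumpSum hg).comp (contDiff_apply ℝ ℝ 0), 2 + 32 * K, by positivity,
    4 * ∑' k : ℕ, Real.exp (-(ω (2 * k + 1) / 2)), ?_, fun α β x => ?_⟩
  · have := (summable_exp_neg_half hg).tsum_pos (fun k => (Real.exp_pos _).le) 0 (Real.exp_pos _)
    linarith
  rw [mderiv_bumpSum hg]
  simp only [mpow, msize, Fin.prod_univ_one, Fin.sum_univ_one]
  rw [abs_mul, abs_pow]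
  have hs : Summable fun k : ℕ => Real.exp (-ω (2 * k + 1)) * |gaussD (β 0) (x 0 - k)| := by
    simpa [abs_mul, Real.abs_exp] using (summable_bump hg (β 0) (x 0)).abs
  have h1 : |bumpSum ω (β 0) (x 0)|
      ≤ ∑' k : ℕ, Real.exp (-ω (2 * k + 1)) * |gaussD (β 0) (x 0 - k)| := by
    have h := norm_tsum_le_tsum_norm (summable_bump hg (β 0) (x 0)).norm
    simpa [bumpSum, abs_mul, Real.abs_exp] using h
  calc |x 0| ^ α 0 * |bumpSum ω (β 0) (x 0)|
      ≤ |x 0| ^ α 0 * ∑' k : ℕ, Real.exp (-ω (2 * k + 1)) * |gaussD (β 0) (x 0 - k)| := by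
        gcongr
    _ = ∑' k : ℕ, |x 0| ^ α 0 * (Real.exp (-ω (2 * k + 1)) * |gaussD (β 0) (x 0 - k)|) :=
        tsum_mul_left.symm
    _ ≤ ∑' k : ℕ, 4 * wWeight ω (2 + 32 * K) (α 0 + β 0) * Real.exp (-(ω (2 * k + 1) / 2)) :=
        (hs.mul_left _).tsum_le_tsum
          (fun k => abs_pow_mul_bump_term_le hg (by linarith) hK (by linarith) _ _ k _)
          ((summable_exp_neg_half hg).mul_left _)
    _ = _ := by rw [tsum_mul_left]; ring

lemma le_bumpSum {ω : ℝ → ℝ} (hω : IsGenWeightFun ω) {t : ℝ} (ht : 1 ≤ t) :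
    Real.exp (-ω (2 * (2 * t)) - 1) ≤ bumpSum ω 0 t := by
  have hf := Nat.floor_le (show 0 ≤ t by linarith)
  have hf2 := Nat.lt_floor_add_one t
  have h := (summable_bump hω 0 t).le_tsum ⌊t⌋₊ fun k _ => by
    simp only [gaussD]; positivity
  refine le_trans ?_ h
  simp only [gaussD]
  rw [← Real.exp_add]
  refine Real.exp_le_exp.2 ?_
  have hm : ω (2 * ⌊t⌋₊ + 1) ≤ ω (2 * (2 * t)) :=
    hω.mono (show (0 : ℝ) ≤ 2 * ⌊t⌋₊ + 1 by positivity) (show 0 ≤ 2 * (2 * t) by linarith)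
      (by linarith)
  have : (t - ⌊t⌋₊) ^ 2 ≤ 1 := pow_le_one₀ (by linarith) (by linarith)
  linarith

/-! ### Necessity of `σ = o(ω)` -/

lemma isLittleO_of_roumieu_subset_beurling {ω σ : ℝ → ℝ} (hω : IsWeightFun ω)
    (hσ : IsGenWeightFun σ) (h : SRoumieuW ω 1 ⊆ SBeurlingW σ 1) : σ =o[atTop] ω := by
  have hg := hω.toIsGenWeightFun
  obtain ⟨-, hb⟩ := h (bumpSum_mem_roumieu hω)
  obtain ⟨L, hL, hα⟩ := hg.alpha
  refine IsLittleO.of_bound fun c hc => ?_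
  -- `D` is chosen so that `ω(4t) + log t + const ≤ D ω(t)` for large `t`.
  set D := L * L + 2 with hD
  have hD0 : 0 < D := by positivity
  obtain ⟨C, hC, hbC⟩ := hb (c / D) (by positivity)
  have hlog : ∀ᶠ t in atTop, Real.log C + 1 + L * L + L ≤ Real.log t :=
    Real.tendsto_log_atTop.eventually_ge_atTop _
  filter_upwards [eventually_gt_atTop 1, hlog, hg.gamma.def (c := 1) one_pos] with t ht h1 h2
  have ht0 : 0 ≤ t := by linarith
  have hn := hg.nonneg t ht0
  rw [Real.norm_of_nonneg (Real.log_nonneg ht.le), Real.norm_of_nonneg hn, one_mul] at h2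
  rw [Real.norm_of_nonneg (hσ.nonneg t ht0), Real.norm_of_nonneg hn]
  have hlow := le_bumpSum hg ht.le
  have hpos : 0 < bumpSum ω 0 t := (Real.exp_pos _).trans_le hlow
  have h3 : σ t ≤ c / D * (Real.log t + Real.log C - Real.log (bumpSum ω 0 t)) := by
    refine le_of_forall_pow_mul_le hσ (by positivity) hC ht hpos fun p => ?_
    have := hbC (fun _ => p) 0 (fun _ => t)
    rw [mderiv_bumpSum hg] at this
    simp only [mpow, msize, Fin.prod_univ_one, Fin.sum_univ_one, Pi.zero_apply, add_zero] at this
    exact (le_abs_self _).trans this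
  have h4 : -ω (2 * (2 * t)) - 1 ≤ Real.log (bumpSum ω 0 t) := by
    rw [Real.le_log_iff_exp_le hpos]; exact hlow
  have h5 : ω (2 * (2 * t)) ≤ L * L * ω t + L * L + L := by
    have a1 := hα t ht0
    have a2 := hα (2 * t) (by linarith)
    nlinarith
  calc σ t ≤ c / D * (Real.log t + Real.log C - Real.log (bumpSum ω 0 t)) := h3
    _ ≤ c / D * (D * ω t) := by
        refine mul_le_mul_of_nonneg_left ?_ (by positivity)
        rw [hD]
        linarith
    _ = c * ω t := by field_simp

/-- Theorem `Gelfand-inclusion4` (III): let `ω` be a non-quasianalytic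
weight function and `σ` a general weight function; then `σ(t) = o(ω(t))` iff
`S_{{ω}}(ℝ^d) ⊆ S_(σ)(ℝ^d)` for every `d`; the forward implication holds for arbitrary
general weight functions and the converse needs only `d = 1`. -/
theorem roumieu_beurling_inclusion_nonquasianalytic_weight_functions (ω σ : ℝ → ℝ) :
    ((IsGenWeightFun ω ∧ IsGenWeightFun σ ∧ σ =o[Filter.atTop] ω) →
      ∀ d : ℕ, 0 < d → SRoumieuW ω d ⊆ SBeurlingW σ d) ∧
    (IsWeightFun ω → MeasureTheory.IntegrableOn (fun t => ω t / t ^ 2) (Set.Ici 1) →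
      IsGenWeightFun σ →
      ((σ =o[Filter.atTop] ω ↔ ∀ d : ℕ, 0 < d → SRoumieuW ω d ⊆ SBeurlingW σ d) ∧
        (SRoumieuW ω 1 ⊆ SBeurlingW σ 1 → σ =o[Filter.atTop] ω))) := by
  refine ⟨fun ⟨hω, hσ, h⟩ d _ => roumieu_subset_beurling_of_isLittleO hω hσ h d,
    fun hω _ hσ => ⟨⟨fun h d _ =>
      roumieu_subset_beurling_of_isLittleO hω.toIsGenWeightFun hσ h d, fun h => ?_⟩, fun h => ?_⟩⟩
  · exact isLittleO_of_roumieu_subset_beurling hω hσ (h 1 one_pos)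
  · exact isLittleO_of_roumieu_subset_beurling hω hσ h
end

section
/- Let 𝓜=(M^{(λ)})_{λ>0} and 𝓝=(N^{(λ)})_{λ>0} be weight matrices. If 𝓜(⪯)𝓝, then S_{(𝓜)}(ℝ^d) ⊆ S_{(𝓝)}(ℝ^d) with continuous inclusion for every dimension d∈ℕ, where continuity means: for all λ,h>0 there exist κ,h'>0 and C≥1 with ‖f‖_{∞,N^{(λ)},h} ≤ C·‖f‖_{∞,M^{(κ)},h'} for every f∈S_{(𝓜)}(ℝ^d). Conversely, if 𝓜 and 𝓝 are standard log-convex, 𝓜 is Beurling non-quasianalytic (i.e. ∑_{p≥1} M^{(λ)}_{p−1}/M^{(λ)}_p < ∞ for every λ>0), 𝓜 satisfies the condition ∀λ>0 ∃κ>0 ∃A≥1 ∀p∈ℕ_0: (M^{(κ)}_p)² ≤ A^p·M^{(λ)}_p, and S_{(𝓜)}(ℝ) ⊆ S_{(𝓝)}(ℝ) holds with continuous inclusion (dimension d=1), then 𝓜(⪯)𝓝. -/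
/-!
The first implication is immediate: the geometric factor `C ^ p` in `M ⪯ N` is absorbed by replacing
`h` with `h / C` (`seqBound_mono`).

For the converse, the continuity of the inclusion is tested on the functions
`f_t(x) = ψ(x) (cos (t x) + sin (t x))`, where `ψ` is a fixed compactly supported function in
`S_(𝓜)(ℝ)` which is `1` near the origin. There `|f_t^{(p)}(0)| = t ^ p`, while the Leibniz rule and
log-convexity bound the seminorm of `f_t` for `M = M^{(κ)}` and `h'` by a constant times
`sup_k (t / η) ^ k / M_k` with `η = h' / 2` (`seqBound_testFun`). Given `p`, the choice
`t = η M_{p+1} / M_p` makes this supremum equal to `(t / η) ^ p / M_p` (`IsLC.pow_quot_le`), and the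
continuity estimate becomes `η ^ p M_p ≤ C N_p`, which is the relation sought.

The function `ψ` exists because `𝓜` is non-quasianalytic. First one finds widths `a_k > 0` with
`∑ a_k ≤ 1` which eventually dominate `(n + 1) M_k / M_{k+1}` for each `M = M^{(1/(n+1))}`, so that
`∏_{k<p} 1 / a_k ≤ C h ^ p M^{(λ)}_p` for all `λ, h > 0` (`exists_widths`). Then `ψ` is the limit
of the moving averages with half-widths `a_0, a_1, …` of a Lipschitz trapezoid; its `p`-th
derivative is bounded by `∏_{k<p} 1 / a_k` (`exists_plateau`).
-/


open Filter Asymptotics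

/-! ### Plateau functions by infinitely iterated averaging -/

/-- The moving average of `g` over the window `[x - a, x + a]`. -/
noncomputable def boxAvg (a : ℝ) (g : ℝ → ℝ) (x : ℝ) : ℝ := (1 / 2) * ∫ u in (-1 : ℝ)..1, g (x + a * u)

/-- The `m`-fold moving average of `g` with successive half-widths `a n, …, a (n + m - 1)`,
the outermost one being `a n`. -/
noncomputable def iterAvg (a : ℕ → ℝ) (g : ℝ → ℝ) : ℕ → ℕ → ℝ → ℝ
  | 0, _ => g
  | m + 1, n => boxAvg (a n) (iterAvg a g m (n + 1))

lemma boxAvg_const (a c x : ℝ) : boxAvg a (fun _ => c) x = c := by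
  simp [boxAvg]; ring

/-- Comparison principle from which all quantitative properties of moving averages follow. -/
lemma abs_boxAvg_sub_le {a c x y : ℝ} {g₁ g₂ : ℝ → ℝ} (h₁ : Continuous g₁) (h₂ : Continuous g₂)
    (h : ∀ u, |u| ≤ 1 → |g₁ (x + a * u) - g₂ (y + a * u)| ≤ c) :
    |boxAvg a g₁ x - boxAvg a g₂ y| ≤ c := by
  unfold boxAvg
  rw [← mul_sub, ← intervalIntegral.integral_sub, abs_mul]
  · have := intervalIntegral.norm_integral_le_of_norm_le_const (a := (-1 : ℝ)) (b := 1) (C := c)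
      (f := fun u => g₁ (x + a * u) - g₂ (y + a * u)) (by
        intro u hu
        rw [Set.uIoc_of_le (by norm_num)] at hu
        exact h u (abs_le.2 ⟨hu.1.le, hu.2⟩))
    rw [Real.norm_eq_abs] at this
    norm_num at this ⊢
    linarith
  · exact (h₁.comp (by fun_prop)).intervalIntegrable _ _
  · exact (h₂.comp (by fun_prop)).intervalIntegrable _ _

lemma abs_boxAvg_sub_const_le {a c r x : ℝ} {g : ℝ → ℝ} (hg : Continuous g)
    (h : ∀ u, |u| ≤ 1 → |g (x + a * u) - r| ≤ c) : |boxAvg a g x - r| ≤ c := by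
  have := abs_boxAvg_sub_le (y := 0) (a := a) hg (continuous_const (y := r)) h
  rwa [boxAvg_const] at this

lemma boxAvg_lipschitz {a : ℝ} {g : ℝ → ℝ} (hg : LipschitzWith 1 g) :
    LipschitzWith 1 (boxAvg a g) := by
  refine LipschitzWith.of_dist_le_mul fun x y => ?_
  rw [Real.dist_eq]
  refine abs_boxAvg_sub_le hg.continuous hg.continuous fun u _ => ?_
  have := hg.dist_le_mul (x + a * u) (y + a * u)
  rwa [Real.dist_eq, dist_add_right] at this

lemma boxAvg_hasDerivAt {a : ℝ} (ha : 0 < a) {g : ℝ → ℝ} (hg : Continuous g) (x : ℝ) :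
    HasDerivAt (boxAvg a g) ((g (x + a) - g (x - a)) / (2 * a)) x := by
  have h : boxAvg a g = fun x => ((∫ t in (0 : ℝ)..(x + a), g t)
      - ∫ t in (0 : ℝ)..(x - a), g t) / (2 * a) := by
    funext x
    have h1 := intervalIntegral.integral_comp_add_mul (a := -1) (b := 1) g ha.ne' x
    rw [boxAvg, h1, intervalIntegral.integral_interval_sub_left (hg.intervalIntegrable _ _)
      (hg.intervalIntegrable _ _), smul_eq_mul, mul_neg_one, mul_one, ← sub_eq_add_neg]
    field_simp
  have hF : ∀ y, HasDerivAt (fun y => ∫ t in (0 : ℝ)..y, g t) (g y) y := fun y =>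
    (hg.integral_hasStrictDerivAt 0 y).hasDerivAt
  rw [h]
  exact (((hF (x + a)).comp_add_const x a).sub ((hF (x - a)).comp_sub_const x a)).div_const _

lemma iterAvg_lipschitz {a : ℕ → ℝ} {g : ℝ → ℝ} (hg : LipschitzWith 1 g) (m : ℕ) :
    ∀ n, LipschitzWith 1 (iterAvg a g m n) := by
  induction m with
  | zero => exact fun _ => hg
  | succ m ih => exact fun n => boxAvg_lipschitz (ih (n + 1))

lemma abs_iterAvg_le {a : ℕ → ℝ} {g : ℝ → ℝ} (hg : LipschitzWith 1 g) (h1 : ∀ x, |g x| ≤ 1)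
    (m : ℕ) : ∀ n x, |iterAvg a g m n x| ≤ 1 := by
  induction m with
  | zero => exact fun _ => h1
  | succ m ih =>
    intro n x
    have := abs_boxAvg_sub_const_le (a := a n) (c := 1) (r := 0) (x := x)
      (iterAvg_lipschitz (a := a) hg m (n + 1)).continuous
      (fun u _ => by simpa using ih (n + 1) (x + a n * u))
    simpa [iterAvg] using this

/-- Consecutive iterated averages of a Lipschitz function differ only by the innermost
half-width. -/
lemma abs_iterAvg_succ_sub_le {a : ℕ → ℝ} (ha : ∀ k, 0 < a k) {g : ℝ → ℝ}
    (hg : LipschitzWith 1 g) (m : ℕ) :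
    ∀ n x, |iterAvg a g m n x - iterAvg a g (m + 1) n x| ≤ a (n + m) := by
  induction m with
  | zero =>
    intro n x
    rw [abs_sub_comm]
    refine abs_boxAvg_sub_const_le hg.continuous fun u hu => ?_
    have := hg.dist_le_mul (x + a n * u) x
    rw [Real.dist_eq, Real.dist_eq, add_sub_cancel_left, abs_mul, abs_of_pos (ha n)] at this
    have h2 := mul_le_mul_of_nonneg_left hu (ha n).le
    simp only [iterAvg, NNReal.coe_one, one_mul, add_zero] at this ⊢
    linarith
  | succ m ih =>
    intro n x
    have e : n + (m + 1) = n + 1 + m := by ring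
    rw [e]
    exact abs_boxAvg_sub_le (iterAvg_lipschitz hg m (n + 1)).continuous
      (iterAvg_lipschitz hg (m + 1) (n + 1)).continuous fun u _ => ih (n + 1) _

/-- Iterated averaging at `s` only sees `g` on the ball around `s` whose radius is the sum of the
half-widths, so constancy there is preserved. -/
lemma iterAvg_eq_of_eq {a : ℕ → ℝ} (ha : ∀ k, 0 < a k) {g : ℝ → ℝ}
    (hg : LipschitzWith 1 g) {s r : ℝ} (m : ℕ) :
    ∀ n, (∀ y, |y - s| ≤ ∑ i ∈ Finset.range m, a (n + i) → g y = r) → iterAvg a g m n s = r := by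
  induction m generalizing s with
  | zero => intro n h; exact h s (by simp)
  | succ m ih =>
    intro n h
    have h0 : |boxAvg (a n) (iterAvg a g m (n + 1)) s - r| ≤ 0 := by
      refine abs_boxAvg_sub_const_le (iterAvg_lipschitz hg m (n + 1)).continuous fun u hu => ?_
      rw [ih (n + 1), sub_self, abs_zero]
      intro y hy
      refine h y ?_
      rw [Finset.sum_range_succ']
      have h2 := mul_le_mul_of_nonneg_left hu (ha n).le
      have h3 : |y - s| ≤ |y - (s + a n * u)| + |a n * u| := by
        have := abs_add_le (y - (s + a n * u)) (a n * u)
        rwa [show y - (s + a n * u) + a n * u = y - s by ring] at this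
      rw [abs_mul, abs_of_pos (ha n)] at h3
      have e : ∀ i, a (n + (i + 1)) = a (n + 1 + i) := fun i => by congr 1; ring
      simp only [e, add_zero]
      linarith
    exact sub_eq_zero.1 (abs_nonpos_iff.1 h0)

/-- The trapezoid which is `1` on `[-2, 2]` and `0` outside `[-3, 3]`. -/
noncomputable def trapezoid (x : ℝ) : ℝ := max 0 (min 1 (3 - |x|))

lemma trapezoid_lipschitz : LipschitzWith 1 trapezoid := by
  have h : LipschitzWith 1 fun x : ℝ => 3 - |x| := by
    refine LipschitzWith.of_dist_le_mul fun x y => ?_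
    simp only [Real.dist_eq, NNReal.coe_one, one_mul, sub_sub_sub_cancel_left]
    rw [abs_sub_comm x y]
    exact abs_abs_sub_abs_le y x
  exact (h.const_min 1).const_max 0

/-- The infinitely iterated averages `G n` of the trapezoid, with half-widths `a n, a (n + 1), …`.
Since `G n` is the average of `G (n + 1)` over windows of half-width `a n`, its derivative is a
difference quotient of `G (n + 1)`. -/
lemma exists_limit_avg {a : ℕ → ℝ} (ha : ∀ k, 0 < a k) (hs : Summable a) (h1 : ∑' k, a k ≤ 1) :
    ∃ G : ℕ → ℝ → ℝ, (∀ n x, |G n x| ≤ 1) ∧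
      (∀ x, |x| ≤ 1 → G 0 x = 1) ∧ (∀ x, 4 ≤ |x| → G 0 x = 0) ∧
      ∀ n x, HasDerivAt (G n) ((G (n + 1) (x + a n) - G (n + 1) (x - a n)) / (2 * a n)) x := by
  have hl := trapezoid_lipschitz
  have hb : ∀ x, |trapezoid x| ≤ 1 := fun x => by
    unfold trapezoid
    rw [abs_of_nonneg (le_max_left _ _)]
    exact max_le zero_le_one (min_le_left _ _)
  have hlim : ∀ n x, ∃ y, Tendsto (fun m => iterAvg a trapezoid m n x) atTop (nhds y) := by
    intro n x
    refine cauchySeq_tendsto_of_complete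
      (cauchySeq_of_dist_le_of_summable (fun m => a (n + m)) (fun m => ?_) ?_)
    · exact abs_iterAvg_succ_sub_le ha hl m n x
    · simpa [add_comm] using (summable_nat_add_iff n).2 hs
  choose G hG using hlim
  have hGl : ∀ n, LipschitzWith 1 (G n) := by
    intro n
    refine LipschitzWith.of_dist_le_mul fun x y => ?_
    exact le_of_tendsto ((hG n x).dist (hG n y))
      (Eventually.of_forall fun m => (iterAvg_lipschitz hl m n).dist_le_mul x y)
  have hsum : ∀ m, ∑ i ∈ Finset.range m, a (0 + i) ≤ 1 := fun m => by
    simpa using (hs.sum_le_tsum _ (fun i _ => (ha i).le)).trans h1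
  have hrec : ∀ n, G n = boxAvg (a n) (G (n + 1)) := by
    intro n
    funext x
    refine tendsto_nhds_unique ((tendsto_add_atTop_iff_nat 1).2 (hG n x)) ?_
    refine Tendsto.const_mul _ ?_
    refine intervalIntegral.tendsto_integral_filter_of_dominated_convergence (fun _ => 1) ?_ ?_ ?_ ?_
    · refine Eventually.of_forall fun m => Continuous.aestronglyMeasurable ?_
      exact (iterAvg_lipschitz hl m (n + 1)).continuous.comp (by fun_prop)
    · exact Eventually.of_forall fun m => Eventually.of_forall fun u _ =>
        abs_iterAvg_le hl hb m (n + 1) _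
    · simp
    · exact Eventually.of_forall fun u _ => hG (n + 1) _
  refine ⟨G, fun n x => ?_, fun x hx => ?_, fun x hx => ?_, fun n x => ?_⟩
  · exact le_of_tendsto (hG n x).abs (Eventually.of_forall fun m => abs_iterAvg_le hl hb m n x)
  · refine tendsto_nhds_unique (hG 0 x) (tendsto_const_nhds.congr fun m => Eq.symm ?_)
    refine iterAvg_eq_of_eq ha hl m 0 fun y hy => ?_
    have h2 : |y| ≤ 2 := by
      have := abs_add_le (y - x) x
      rw [sub_add_cancel] at this
      linarith [hsum m]
    rw [trapezoid, min_eq_left (by linarith), max_eq_right zero_le_one]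
  · refine tendsto_nhds_unique (hG 0 x) (tendsto_const_nhds.congr fun m => Eq.symm ?_)
    refine iterAvg_eq_of_eq ha hl m 0 fun y hy => ?_
    have h2 : 3 ≤ |y| := by
      have := abs_sub_abs_le_abs_sub x y
      rw [abs_sub_comm] at this
      linarith [hsum m]
    rw [trapezoid, max_eq_left]
    exact (min_le_right _ _).trans (by linarith)
  · have := boxAvg_hasDerivAt (ha n) (hGl (n + 1)).continuous x
    rwa [← hrec n] at this

/-- A smooth plateau function with controlled derivatives: by the difference quotient formula each
derivative of the infinitely iterated average costs one factor `1 / a k`. -/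
lemma exists_plateau {a : ℕ → ℝ} (ha : ∀ k, 0 < a k) (hs : Summable a) (h1 : ∑' k, a k ≤ 1) :
    ∃ ψ : ℝ → ℝ, ContDiff ℝ (⊤ : ℕ∞) ψ ∧ (∀ x, |x| ≤ 1 → ψ x = 1) ∧ (∀ x, 4 ≤ |x| → ψ x = 0) ∧
      ∀ p x, |iteratedDeriv p ψ x| ≤ ∏ k ∈ Finset.range p, 1 / a k := by
  obtain ⟨G, hb, hone, hzero, hder⟩ := exists_limit_avg ha hs h1
  have hd : ∀ n, deriv (G n) = fun x =>
      (G (n + 1) (x + a n) - G (n + 1) (x - a n)) / (2 * a n) := fun n =>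
    funext fun x => (hder n x).deriv
  have hsm : ∀ p : ℕ, ∀ n, ContDiff ℝ p (G n) := by
    intro p
    induction p with
    | zero =>
      exact fun n => contDiff_zero.2 (continuous_iff_continuousAt.2 fun x => (hder n x).continuousAt)
    | succ p ih =>
      intro n
      rw [Nat.cast_succ]
      refine contDiff_succ_iff_deriv.2 ⟨fun x => (hder n x).differentiableAt, by simp, ?_⟩
      rw [hd]
      exact (((ih (n + 1)).comp (contDiff_id.add contDiff_const)).sub
        ((ih (n + 1)).comp (contDiff_id.sub contDiff_const))).div_const _
  have hbd : ∀ p n x, |iteratedDeriv p (G n) x| ≤ ∏ k ∈ Finset.range p, 1 / a (n + k) := by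
    intro p
    induction p with
    | zero => intro n x; simpa using hb n x
    | succ p ih =>
      intro n x
      have e1 : ContDiff ℝ p fun x => G (n + 1) (x + a n) :=
        (hsm p (n + 1)).comp (contDiff_id.add contDiff_const)
      have e2 : ContDiff ℝ p fun x => G (n + 1) (x - a n) :=
        (hsm p (n + 1)).comp (contDiff_id.sub contDiff_const)
      rw [iteratedDeriv_succ', hd, iteratedDeriv_div_const,
        iteratedDeriv_fun_sub e1.contDiffAt e2.contDiffAt, iteratedDeriv_comp_add_const,
        iteratedDeriv_comp_sub_const, Finset.prod_range_succ', abs_div,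
        abs_of_pos (mul_pos two_pos (ha n))]
      have e : ∀ i, a (n + (i + 1)) = a (n + 1 + i) := fun i => by congr 1; ring
      simp only [e, add_zero]
      have i1 := ih (n + 1) (x + a n)
      have i2 := ih (n + 1) (x - a n)
      have i3 := abs_sub (iteratedDeriv p (G (n + 1)) (x + a n))
        (iteratedDeriv p (G (n + 1)) (x - a n))
      have hpos := ha n
      rw [mul_one_div, div_le_div_iff₀ (by positivity) (by positivity)]
      nlinarith
  refine ⟨G 0, contDiff_infty.2 fun p => hsm p 0, hone, hzero, fun p x => ?_⟩
  simpa using hbd p 0 x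

/-! ### Weight sequences and the choice of widths -/

/-- A single positive summable sequence eventually dominating countably many summable ones. -/
lemma exists_summable_dominating {b : ℕ → ℕ → ℝ} (hb : ∀ n k, 0 ≤ b n k)
    (hs : ∀ n, Summable (b n)) :
    ∃ a : ℕ → ℝ, (∀ k, 0 < a k) ∧ Summable a ∧ ∑' k, a k ≤ 1 ∧
      ∀ n, ∀ᶠ k in atTop, b n k ≤ a k := by
  have hK : ∀ n, ∃ K, ∑' k, b n (k + K) ≤ (1 / 2 : ℝ) ^ n / 4 := fun n =>
    ((tendsto_sum_nat_add (b n)).eventually_le_const (by positivity)).exists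
  choose K hK using hK
  let c : ℕ × ℕ → ℝ := fun x => if K x.1 ≤ x.2 then b x.1 x.2 else 0
  have hc0 : ∀ x, 0 ≤ c x := fun x => by
    simp only [c]; split_ifs
    · exact hb _ _
    · exact le_rfl
  have hcs : ∀ n, Summable fun k => c (n, k) := fun n =>
    (hs n).of_nonneg_of_le (fun k => hc0 _) fun k => by
      simp only [c]; split_ifs
      · exact le_rfl
      · exact hb _ _
  have hct : ∀ n, ∑' k, c (n, k) ≤ (1 / 2 : ℝ) ^ n / 4 := fun n => by
    refine le_trans (le_of_eq ?_) (hK n)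
    rw [← (hcs n).sum_add_tsum_nat_add (K n), Finset.sum_eq_zero, zero_add]
    · simp [c]
    · intro k hk
      simp [c, Finset.mem_range.1 hk]
  have hg : Summable fun n : ℕ => (1 / 2 : ℝ) ^ n / 4 := summable_geometric_two.div_const 4
  have hgt : ∑' n : ℕ, (1 / 2 : ℝ) ^ n / 4 = 1 / 2 := by
    rw [tsum_div_const, tsum_geometric_two]; norm_num
  have hn : Summable fun n => ∑' k, c (n, k) :=
    hg.of_nonneg_of_le (fun n => tsum_nonneg fun k => hc0 _) hct
  have hcS : Summable c := (summable_prod_of_nonneg hc0).2 ⟨hcs, hn⟩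
  have hcS' : Summable fun x : ℕ × ℕ => c (x.2, x.1) := hcS.prod_symm
  have hd := (summable_prod_of_nonneg (f := fun x : ℕ × ℕ => c (x.2, x.1)) fun x => hc0 _).1 hcS'
  refine ⟨fun k => (1 / 2 : ℝ) ^ k / 4 + ∑' n, c (n, k), fun k => ?_, hg.add hd.2, ?_, fun n => ?_⟩
  · have : 0 ≤ ∑' n, c (n, k) := tsum_nonneg fun n => hc0 (n, k)
    positivity
  · rw [hg.tsum_add hd.2, hgt]
    have h1 : ∑' k, ∑' n, c (n, k) = ∑' n, ∑' k, c (n, k) :=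
      hcS.tsum_comm (f := fun n k => c (n, k))
    have h2 := hn.tsum_le_tsum hct hg
    rw [hgt] at h2
    linarith
  · filter_upwards [eventually_ge_atTop (K n)] with k hk
    have h1 := (hd.1 k).le_tsum n fun m _ => hc0 _
    have h2 : c (n, k) = b n k := by simp [c, hk]
    have h3 : (0 : ℝ) ≤ (1 / 2 : ℝ) ^ k / 4 := by positivity
    simp only at h1
    linarith

lemma exists_bound_of_eventually_le {u : ℕ → ℝ} {c : ℝ} (h : ∀ᶠ k in atTop, u k ≤ c) :
    ∃ C : ℝ, 0 < C ∧ ∀ k, u k ≤ C := by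
  obtain ⟨C, hC⟩ := (isBoundedUnder_of_eventually_le h).bddAbove_range
  exact ⟨max C 1, lt_max_of_lt_right one_pos, fun k =>
    (hC (Set.mem_range_self k)).trans (le_max_left _ _)⟩

lemma IsLC.exists_pow_le {M : ℕ → ℝ} (hM : IsLC M) {c : ℝ} (hc : 0 ≤ c) :
    ∃ C : ℝ, 0 < C ∧ ∀ k, c ^ k ≤ C * M k := by
  obtain ⟨C, hC, h⟩ := exists_bound_of_eventually_le (u := fun k => c ^ k / M k) (c := 1) (by
    filter_upwards [hM.root_tendsto.eventually_ge_atTop c, eventually_gt_atTop 0] with k hk hk0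
    rw [div_le_one (hM.pos k)]
    calc c ^ k ≤ (M k ^ (1 / (k : ℝ))) ^ k := by gcongr
      _ = M k := by
        rw [one_div, Real.rpow_inv_natCast_pow (hM.pos k).le hk0.ne'])
  exact ⟨C, hC, fun k => (div_le_iff₀ (hM.pos k)).1 (h k)⟩

/-- Log-convexity: the quotients `M (k + 1) / M k` increase, in product form. -/
lemma IsLC.quot_mono {M : ℕ → ℝ} (hM : IsLC M) (i j : ℕ) :
    M (i + 1) * M (i + j) ≤ M i * M (i + j + 1) := by
  induction j with
  | zero => simp [mul_comm]
  | succ j ih =>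
    have h1 := hM.logConvex (i + j)
    have p1 := hM.pos (i + j)
    have p2 := hM.pos (i + j + 1)
    have p3 := hM.pos i
    have p4 := hM.pos (i + 1)
    have e : i + (j + 1) = i + j + 1 := by ring
    rw [e]
    have h2 : M (i + 1) * M (i + j + 1) * M (i + j) ≤ M i * M (i + j + 1 + 1) * M (i + j) := by
      have h3 := mul_le_mul_of_nonneg_right ih p2.le
      have h4 := mul_le_mul_of_nonneg_left h1 p3.le
      nlinarith
    exact le_of_mul_le_mul_right h2 p1

lemma IsLC.mul_le {M : ℕ → ℝ} (hM : IsLC M) (i j : ℕ) : M i * M j ≤ M (i + j) := by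
  induction i with
  | zero => simp [hM.norm0]
  | succ i ih =>
    have h := hM.quot_mono i j
    have e : i + 1 + j = i + j + 1 := by ring
    rw [e]
    have p1 := hM.pos (i + j)
    have p2 := hM.pos (i + j + 1)
    have p3 := hM.pos i
    have p4 := hM.pos (i + 1)
    have h2 : M (i + 1) * M j * M i ≤ M (i + j + 1) * M i := by
      have h3 := mul_le_mul_of_nonneg_left ih p4.le
      nlinarith
    exact le_of_mul_le_mul_right h2 p3

/-- The supremum over `k` of `t ^ k / M k` at `t = M (p + 1) / M p` is attained at `k = p`. -/
lemma IsLC.pow_quot_le {M : ℕ → ℝ} (hM : IsLC M) (p k : ℕ) :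
    (M (p + 1) / M p) ^ k ≤ (M (p + 1) / M p) ^ p / M p * M k := by
  set q := M (p + 1) / M p with hq
  have hp := hM.pos p
  have hq0 : 0 < q := div_pos (hM.pos _) hp
  have hqp : q * M p = M (p + 1) := div_mul_cancel₀ _ hp.ne'
  suffices h : q ^ k * M p ≤ q ^ p * M k by
    rw [div_mul_eq_mul_div, le_div_iff₀ hp]; exact h
  rcases le_total p k with h | h
  · induction k, h using Nat.le_induction with
    | base => exact le_rfl
    | succ k hk ih =>
      obtain ⟨j, rfl⟩ := Nat.exists_eq_add_of_le hk
      have h1 := hM.quot_mono p j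
      have h2 : q * M (p + j) ≤ M (p + j + 1) := by
        rw [← hqp] at h1
        refine le_of_mul_le_mul_left (a := M p) ?_ hp
        linarith
      calc q ^ (p + j + 1) * M p = q * (q ^ (p + j) * M p) := by ring
        _ ≤ q * (q ^ p * M (p + j)) := by gcongr
        _ = q ^ p * (q * M (p + j)) := by ring
        _ ≤ q ^ p * M (p + j + 1) := by gcongr
  · induction h using Nat.decreasingInduction with
    | self => exact le_rfl
    | of_succ k hk ih =>
      obtain ⟨j, rfl⟩ := Nat.exists_eq_add_of_le hk.le
      have h1 := hM.quot_mono k j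
      have h2 : M (k + 1) ≤ q * M k := by
        rw [← hqp] at h1
        refine le_of_mul_le_mul_right (a := M (k + j)) ?_ hp
        linarith
      refine le_of_mul_le_mul_left (a := q) ?_ hq0
      calc q * (q ^ k * M (k + j)) = q ^ (k + 1) * M (k + j) := by ring
        _ ≤ q ^ (k + j) * M (k + 1) := ih
        _ ≤ q ^ (k + j) * (q * M k) := by gcongr
        _ = q * (q ^ (k + j) * M k) := by ring

/-- Widths for the construction of the plateau function: their inverse products are
below every sequence of the matrix, up to arbitrarily small geometric factors. -/
lemma exists_widths {M : ℝ → ℕ → ℝ} (hM : IsWeightMatrix M) (hQ : ∀ l > 0, nonQA (M l)) :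
    ∃ a : ℕ → ℝ, (∀ k, 0 < a k) ∧ Summable a ∧ ∑' k, a k ≤ 1 ∧
      ∀ l > 0, ∀ h > 0, ∃ C : ℝ, 0 < C ∧
        ∀ p, ∏ k ∈ Finset.range p, 1 / a k ≤ C * h ^ p * M l p := by
  have hpos : ∀ l > 0, ∀ p, 0 < M l p := fun l hl => (hM.1 l hl).1
  have hn : ∀ n : ℕ, (0 : ℝ) < 1 / (n + 1) := fun n => Nat.one_div_pos_of_nat
  obtain ⟨a, ha, hs, h1, hdom⟩ := exists_summable_dominating
    (b := fun n k => (n + 1 : ℝ) * (M (1 / (n + 1)) k / M (1 / (n + 1)) (k + 1)))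
    (fun n k => by have := hpos _ (hn n) k; have := hpos _ (hn n) (k + 1); positivity)
    (fun n => (hQ _ (hn n)).mul_left _)
  refine ⟨a, ha, hs, h1, fun l hl h hh => ?_⟩
  obtain ⟨n, hnl⟩ := exists_nat_one_div_lt (lt_min hl hh)
  have hml := hpos _ (hn n)
  obtain ⟨K, hK⟩ := eventually_atTop.1 (hdom n)
  set m := M (1 / (n + 1))
  set r : ℕ → ℝ := fun p => (∏ k ∈ Finset.range p, 1 / a k) / ((1 / (n + 1)) ^ p * m p) with hr
  have hden : ∀ p, 0 < (1 / ((n : ℝ) + 1)) ^ p * m p := fun p => by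
    have := hml p; positivity
  -- Beyond `K` the ratios `r` decrease, since the next factor is `(n + 1) * m p / (m (p + 1) * a p)`.
  have hdec : ∀ p ≥ K, r p ≤ r K := by
    intro p hp
    induction p, hp using Nat.le_induction with
    | base => exact le_rfl
    | succ p hp ih =>
      refine le_trans ?_ ih
      have h2 := hK p hp
      have m1 := hml p
      have m2 := hml (p + 1)
      have ap := ha p
      rw [← mul_div_assoc, div_le_iff₀ m2] at h2
      simp only [hr]
      rw [Finset.prod_range_succ, div_le_div_iff₀ (hden _) (hden _)]
      have hP : 0 ≤ ∏ k ∈ Finset.range p, 1 / a k := Finset.prod_nonneg fun k _ => by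
        have := ha k; positivity
      have h3 : 1 / a p * m p ≤ 1 / ((n : ℝ) + 1) * m (p + 1) := by
        rw [div_mul_eq_mul_div, div_mul_eq_mul_div, div_le_div_iff₀ ap (by positivity)]
        linarith
      calc (∏ k ∈ Finset.range p, 1 / a k) * (1 / a p) * ((1 / ((n : ℝ) + 1)) ^ p * m p)
          = (∏ k ∈ Finset.range p, 1 / a k) * (1 / ((n : ℝ) + 1)) ^ p * (1 / a p * m p) := by ring
        _ ≤ (∏ k ∈ Finset.range p, 1 / a k) * (1 / ((n : ℝ) + 1)) ^ p *
              (1 / ((n : ℝ) + 1) * m (p + 1)) := by gcongr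
        _ = _ := by ring
  obtain ⟨C, hC, hb⟩ := exists_bound_of_eventually_le (eventually_atTop.2 ⟨K, hdec⟩)
  refine ⟨C, hC, fun p => ((div_le_iff₀ (hden p)).1 (hb p)).trans ?_⟩
  have hle : m p ≤ M l p := hM.2 _ _ (hn n) (hnl.le.trans (min_le_left _ _)) p
  have hle2 : 1 / ((n : ℝ) + 1) ≤ h := hnl.le.trans (min_le_right _ _)
  have := hml p
  rw [mul_assoc]
  gcongr

/-! ### Test functions -/

lemma osc_contDiff (A B t : ℝ) :
    ContDiff ℝ (⊤ : ℕ∞) fun x : ℝ => A * Real.cos (t * x) + B * Real.sin (t * x) := by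
  fun_prop

lemma osc_deriv (A B t : ℝ) :
    deriv (fun x : ℝ => A * Real.cos (t * x) + B * Real.sin (t * x)) =
      fun x : ℝ => (t * B) * Real.cos (t * x) + (-(t * A)) * Real.sin (t * x) := by
  funext x
  have h0 : HasDerivAt (fun x : ℝ => t * x) t x := by
    simpa using (hasDerivAt_id x).const_mul t
  have := ((h0.cos).const_mul A).add ((h0.sin).const_mul B)
  rw [show (fun x : ℝ => A * Real.cos (t * x) + B * Real.sin (t * x)) =
    (fun x : ℝ => A * Real.cos (t * x)) + (fun x : ℝ => B * Real.sin (t * x)) from rfl, this.deriv]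
  ring

/-- The derivatives of `A cos (t x) + B sin (t x)` with `|A| = |B|` are of size `t ^ k` everywhere,
and exactly so at the origin, whatever the parity of `k`. -/
lemma osc_iteratedDeriv {t : ℝ} (ht : 0 ≤ t) (k : ℕ) : ∀ A B c : ℝ, |A| = c → |B| = c →
    (∀ x, |iteratedDeriv k (fun x : ℝ => A * Real.cos (t * x) + B * Real.sin (t * x)) x|
      ≤ 2 * (c * t ^ k)) ∧
    |iteratedDeriv k (fun x : ℝ => A * Real.cos (t * x) + B * Real.sin (t * x)) 0| = c * t ^ k := by
  induction k with
  | zero =>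
    intro A B c hA hB
    refine ⟨fun x => ?_, by simpa using hA⟩
    have h1 := abs_add_le (A * Real.cos (t * x)) (B * Real.sin (t * x))
    rw [abs_mul, abs_mul, hA, hB] at h1
    have hc : 0 ≤ c := hA ▸ abs_nonneg A
    have h2 := mul_le_mul_of_nonneg_left (Real.abs_cos_le_one (t * x)) hc
    have h3 := mul_le_mul_of_nonneg_left (Real.abs_sin_le_one (t * x)) hc
    simp only [iteratedDeriv_zero, pow_zero]
    linarith
  | succ k ih =>
    intro A B c hA hB
    have := ih (t * B) (-(t * A)) (t * c) (by rw [abs_mul, hB, abs_of_nonneg ht])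
      (by rw [abs_neg, abs_mul, hA, abs_of_nonneg ht])
    rw [iteratedDeriv_succ', osc_deriv]
    rwa [show c * t ^ (k + 1) = t * c * t ^ k by ring]

lemma pderivOp_comp_eval {F : ℝ → ℝ} (hF : Differentiable ℝ F) :
    pderivOp (0 : Fin 1) (fun x => F (x 0)) = fun x => deriv F (x 0) := by
  funext x
  have h1 : HasFDerivAt (fun y : Fin 1 → ℝ => y 0)
      (ContinuousLinearMap.proj (R := ℝ) (φ := fun _ : Fin 1 => ℝ) 0) x :=
    (ContinuousLinearMap.proj (R := ℝ) (φ := fun _ : Fin 1 => ℝ) 0).hasFDerivAt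
  have h2 := (hF (x 0)).hasDerivAt.comp_hasFDerivAt x h1
  unfold pderivOp
  have h3 : HasFDerivAt (fun y : Fin 1 → ℝ => F (y 0)) _ x := h2
  rw [h3.fderiv]
  simp

/-- In dimension one, multi-index derivatives are ordinary iterated derivatives. -/
lemma mderiv_comp_eval {F : ℝ → ℝ} (hF : ContDiff ℝ (⊤ : ℕ∞) F) (β : Fin 1 → ℕ) :
    mderiv β (fun x => F (x 0)) = fun x => iteratedDeriv (β 0) F (x 0) := by
  have key : ∀ n : ℕ, (pderivOp (0 : Fin 1))^[n] (fun x => F (x 0)) =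
      fun x => iteratedDeriv n F (x 0) := by
    intro n
    induction n with
    | zero => simp
    | succ n ih =>
      rw [Function.iterate_succ_apply', ih, pderivOp_comp_eval, iteratedDeriv_succ]
      exact hF.differentiable_iteratedDeriv n (by exact_mod_cast ENat.natCast_lt_top n)
  simpa [mderiv, List.finRange_succ] using key (β 0)

/-- The modulated plateau function `ψ(x) (cos (t x) + sin (t x))`, as a function on `ℝ¹`. The
factors `1` match the general form `A cos (t x) + B sin (t x)`. -/
noncomputable def testFun (ψ : ℝ → ℝ) (t : ℝ) (x : Fin 1 → ℝ) : ℝ :=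
  ψ (x 0) * (1 * Real.cos (t * x 0) + 1 * Real.sin (t * x 0))

/-- The Leibniz rule, together with `M i * M j ≤ M (i + j)`, bounds the seminorms of the test
functions. The frequency `t` enters only through `E`, any bound for all the `(t / η) ^ p / M p`. -/
lemma seqBound_testFun {ψ : ℝ → ℝ} (hψ : ContDiff ℝ (⊤ : ℕ∞) ψ) (h4 : ∀ x, 4 ≤ |x| → ψ x = 0)
    {M : ℕ → ℝ} (hM : IsLC M) {P : ℕ → ℝ} (hP : ∀ p x, |iteratedDeriv p ψ x| ≤ P p)
    {t η C₁ C₂ E : ℝ} (ht : 0 ≤ t) (hη : 0 < η) (hC₁ : 0 < C₁) (hC₂ : 0 < C₂) (hE : 0 < E)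
    (hPM : ∀ p, P p ≤ C₁ * η ^ p * M p) (h4M : ∀ p, (4 / η) ^ p ≤ C₂ * M p)
    (htM : ∀ p, (t / η) ^ p ≤ E * M p) :
    seqBound M (2 * η) (2 * C₁ * C₂ * E) (testFun ψ t) := by
  intro α β x
  set e : ℝ → ℝ := fun x => 1 * Real.cos (t * x) + 1 * Real.sin (t * x)
  have he : ContDiff ℝ (⊤ : ℕ∞) e := osc_contDiff 1 1 t
  have hpos := hM.pos
  have h4M' : ∀ p, 4 ^ p ≤ C₂ * η ^ p * M p := fun p => by
    have := h4M p
    rw [div_pow, div_le_iff₀ (by positivity)] at this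
    linarith
  have htM' : ∀ p, t ^ p ≤ E * η ^ p * M p := fun p => by
    have := htM p
    rw [div_pow, div_le_iff₀ (by positivity)] at this
    linarith
  have hα : msize α = α 0 := by simp [msize]
  have hβ : msize β = β 0 := by simp [msize]
  have hmp : mpow x α = x 0 ^ α 0 := by simp [mpow]
  have hmd : mderiv β (testFun ψ t) x = iteratedDeriv (β 0) (ψ * e) (x 0) :=
    congrFun (mderiv_comp_eval (hψ.mul he) β) x
  rw [hα, hβ, hmp, hmd]
  generalize α 0 = i, β 0 = j, x 0 = s
  rcases lt_or_ge 4 |s| with hs | hs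
  · have h0 : (ψ * e) =ᶠ[nhds s] fun _ => 0 := by
      filter_upwards [(isOpen_lt continuous_const continuous_abs).mem_nhds hs] with y hy
      simp [h4 y (le_of_lt hy)]
    rw [h0.iteratedDeriv_eq]
    have := hpos (i + j)
    have hz : iteratedDeriv j (fun _ : ℝ => (0 : ℝ)) s = 0 := by
      simp
    rw [hz, mul_zero, abs_zero]
    positivity
  have hsum : |iteratedDeriv j (ψ * e) s| ≤ 2 * C₁ * E * (2 * η) ^ j * M j := by
    rw [iteratedDeriv_mul (hψ.of_le (by exact_mod_cast le_top)).contDiffAt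
      (he.of_le (by exact_mod_cast le_top)).contDiffAt]
    calc _ ≤ ∑ k ∈ Finset.range (j + 1),
          |(j.choose k : ℝ) * iteratedDeriv k ψ s * iteratedDeriv (j - k) e s| :=
          Finset.abs_sum_le_sum_abs _ _
      _ ≤ ∑ k ∈ Finset.range (j + 1), (j.choose k : ℝ) * (2 * C₁ * E * η ^ j * M j) := by
          refine Finset.sum_le_sum fun k hk => ?_
          have hkj : k + (j - k) = j := by
            have := Finset.mem_range.1 hk
            omega
          rw [abs_mul, abs_mul, Nat.abs_cast, mul_assoc]
          refine mul_le_mul_of_nonneg_left ?_ (by positivity)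
          have b1 := (hP k s).trans (hPM k)
          have b2 : |iteratedDeriv (j - k) e s| ≤ 2 * (E * η ^ (j - k) * M (j - k)) := by
            have := (osc_iteratedDeriv ht (j - k) 1 1 1 (by simp) (by simp)).1 s
            have h2 := htM' (j - k)
            rw [one_mul] at this
            linarith
          have m1 := hpos k
          have m2 := hpos (j - k)
          calc _ ≤ (C₁ * η ^ k * M k) * (2 * (E * η ^ (j - k) * M (j - k))) :=
                mul_le_mul b1 b2 (abs_nonneg _) (by positivity)
            _ = 2 * C₁ * E * η ^ (k + (j - k)) * (M k * M (j - k)) := by rw [pow_add]; ring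
            _ ≤ 2 * C₁ * E * η ^ (k + (j - k)) * M (k + (j - k)) := by
                have := hM.mul_le k (j - k)
                gcongr
            _ = _ := by rw [hkj]
      _ = _ := by
          rw [← Finset.sum_mul, ← Nat.cast_sum, Nat.sum_range_choose, mul_pow]
          push_cast
          ring
  have hsi : |s ^ i| ≤ C₂ * (2 * η) ^ i * M i := by
    rw [abs_pow]
    have m1 := hpos i
    calc |s| ^ i ≤ 4 ^ i := by gcongr
      _ ≤ C₂ * η ^ i * M i := h4M' i
      _ ≤ C₂ * (2 * η) ^ i * M i := by gcongr; linarith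
  have m1 := hpos i
  have m2 := hpos j
  rw [abs_mul]
  calc _ ≤ (C₂ * (2 * η) ^ i * M i) * (2 * C₁ * E * (2 * η) ^ j * M j) :=
        mul_le_mul hsi hsum (abs_nonneg _) (by positivity)
    _ = 2 * C₁ * C₂ * E * (2 * η) ^ (i + j) * (M i * M j) := by rw [pow_add]; ring
    _ ≤ _ := by
      have := hM.mul_le i j
      gcongr

/-- The relation `M ⪯ N` turns bounds for `M` into bounds for `N`, the constant being absorbed in
the parameter `h`. -/
lemma seqBound_mono {d : ℕ} {M N : ℕ → ℝ} {C h D : ℝ} {f : (Fin d → ℝ) → ℝ} (hC : 0 < C)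
    (hh : 0 ≤ h) (hD : 0 ≤ D) (hMN : ∀ p, M p ≤ C ^ p * N p) (hf : seqBound M (h / C) D f) :
    seqBound N h D f := by
  intro α β x
  refine (hf α β x).trans ?_
  generalize msize α + msize β = n
  calc D * (h / C) ^ n * M n ≤ D * (h / C) ^ n * (C ^ n * N n) := by
        have := hMN n
        gcongr
    _ = D * h ^ n * N n := by
        rw [div_pow]
        field_simp

/-- Theorem `Beurlingprop`: for weight matrices `𝓜, 𝓝`, `𝓜(⪯)𝓝` implies
`S_(𝓜)(ℝ^d) ⊆ S_(𝓝)(ℝ^d)` with continuous inclusion for every `d`; conversely, if both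
matrices are standard log-convex, `𝓜` is Beurling non-quasianalytic and satisfies the
Beurling square condition `∀λ ∃κ ∃A≥1 ∀p, (M^{(κ)}_p)² ≤ A^p M^{(λ)}_p`, and the continuous
inclusion holds in dimension `1`, then `𝓜(⪯)𝓝`. -/
theorem beurling_inclusion_nonquasianalytic_matrices (M N : ℝ → ℕ → ℝ)
    (hM : IsWeightMatrix M) (hN : IsWeightMatrix N) :
    (matPreceqB M N →
      ∀ d : ℕ, 0 < d → SBeurlingMat M d ⊆ SBeurlingMat N d ∧ contIncBMat M N d) ∧
    (StdLogConvex M → StdLogConvex N → (∀ l > 0, nonQA (M l)) →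
      (∀ l > 0, ∃ k > 0, ∃ A : ℝ, 1 ≤ A ∧ ∀ p : ℕ, M k p ^ 2 ≤ A ^ p * M l p) →
      (SBeurlingMat M 1 ⊆ SBeurlingMat N 1 ∧ contIncBMat M N 1) → matPreceqB M N) := by
  refine ⟨fun hMN d _ => ⟨fun f hf l hl => ?_, fun l hl h hh => ?_⟩, ?_⟩
  · obtain ⟨k, hk, C, hC, hle⟩ := hMN l hl
    refine ⟨(hf k hk).1, fun h hh => ?_⟩
    have hC0 : 0 < C := one_pos.trans_le hC
    obtain ⟨D, hD, hb⟩ := (hf k hk).2 (h / C) (div_pos hh hC0)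
    exact ⟨D, hD, seqBound_mono hC0 hh.le hD.le hle hb⟩
  · obtain ⟨k, hk, C, hC, hle⟩ := hMN l hl
    have hC0 : 0 < C := one_pos.trans_le hC
    refine ⟨k, hk, h / C, div_pos hh hC0, 1, le_rfl, fun f _ D hD hb => ?_⟩
    rw [one_mul]
    exact seqBound_mono hC0 hh.le hD hle hb
  · rintro hML - hQ - ⟨-, hcont⟩ l hl
    obtain ⟨a, ha, hs, h1, hP⟩ := exists_widths hM hQ
    obtain ⟨ψ, hψ, hone, hzero, hder⟩ := exists_plateau ha hs h1
    have hmem : ∀ t ≥ 0, testFun ψ t ∈ SBeurlingMat M 1 := by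
      intro t ht k hk
      refine ⟨?_, fun h hh => ?_⟩
      · have h0 : ContDiff ℝ (⊤ : ℕ∞) fun x : Fin 1 → ℝ => x 0 := contDiff_apply ℝ ℝ 0
        exact (hψ.mul (osc_contDiff 1 1 t)).comp h0
      · obtain ⟨C₁, hC₁, b₁⟩ := hP k hk (h / 2) (half_pos hh)
        obtain ⟨C₂, hC₂, b₂⟩ := (hML k hk).exists_pow_le (c := 4 / (h / 2)) (by positivity)
        obtain ⟨E, hE, b₃⟩ := (hML k hk).exists_pow_le (c := t / (h / 2)) (by positivity)
        have := seqBound_testFun hψ hzero (hML k hk) hder ht (half_pos hh) hC₁ hC₂ hE b₁ b₂ b₃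
        rw [mul_div_cancel₀ h two_ne_zero] at this
        exact ⟨_, by positivity, this⟩
    obtain ⟨k, hk, h, hh, C, hC, hinc⟩ := hcont l hl 1 one_pos
    have hLC := hML k hk
    have hNpos := (hN.1 l hl).1
    obtain ⟨C₁, hC₁, b₁⟩ := hP k hk (h / 2) (half_pos hh)
    obtain ⟨C₂, hC₂, b₂⟩ := hLC.exists_pow_le (c := 4 / (h / 2)) (by positivity)
    have hη : 0 < h / 2 := half_pos hh
    have key : ∀ p, M k p ≤ C * (2 * C₁ * C₂) * (1 / (h / 2)) ^ p * N l p := by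
      intro p
      have hp := hLC.pos p
      have hp1 := hLC.pos (p + 1)
      -- The frequency `η * M (p + 1) / M p`, with `η = h / 2`, makes the weighted supremum of
      -- its powers be attained at `p`.
      set q := M k (p + 1) / M k p with hq
      have hq0 : 0 < q := div_pos hp1 hp
      have ht : 0 ≤ h / 2 * q := by positivity
      have hE : 0 < q ^ p / M k p := by positivity
      have hb := seqBound_testFun hψ hzero hLC hder ht hη hC₁ hC₂ hE b₁ b₂ (fun j => by
        rw [mul_div_cancel_left₀ q hη.ne']
        exact hLC.pow_quot_le p j)
      rw [mul_div_cancel₀ h two_ne_zero] at hb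
      have h2 := hinc _ (hmem _ ht) _ (by positivity) hb (fun _ => 0) (fun _ => p) (fun _ => 0)
      have hmd : mderiv (fun _ => p) (testFun ψ (h / 2 * q)) (fun _ => 0) =
          iteratedDeriv p (fun x : ℝ => ψ x *
            (1 * Real.cos (h / 2 * q * x) + 1 * Real.sin (h / 2 * q * x))) 0 :=
        congrFun (mderiv_comp_eval (hψ.mul (osc_contDiff 1 1 (h / 2 * q))) _) _
      have hev : (fun x : ℝ => ψ x *
            (1 * Real.cos (h / 2 * q * x) + 1 * Real.sin (h / 2 * q * x))) =ᶠ[nhds 0]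
          fun x : ℝ => 1 * Real.cos (h / 2 * q * x) + 1 * Real.sin (h / 2 * q * x) := by
        have : {x : ℝ | |x| < 1} ∈ nhds (0 : ℝ) :=
          (isOpen_lt continuous_abs continuous_const).mem_nhds (by simp)
        filter_upwards [this] with x hx
        rw [hone x (le_of_lt hx), one_mul]
      rw [hmd, hev.iteratedDeriv_eq, abs_mul,
        (osc_iteratedDeriv ht p 1 1 1 (by simp) (by simp)).2] at h2
      simp only [mpow, msize, pow_zero, Finset.prod_const_one, abs_one, Finset.univ_unique,
        Finset.sum_singleton, one_mul, zero_add, one_pow, mul_one, mul_pow] at h2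
      have hNp := hNpos p
      have h3 : (h / 2) ^ p * M k p ≤ C * (2 * C₁ * C₂) * N l p := by
        have hqp : 0 < q ^ p := by positivity
        refine le_of_mul_le_mul_right (a := q ^ p / M k p) ?_ hE
        calc (h / 2) ^ p * M k p * (q ^ p / M k p) = (h / 2) ^ p * q ^ p := by field_simp
          _ ≤ _ := h2
          _ = _ := by ring
      rw [one_div, inv_pow, mul_assoc, mul_comm (((h / 2) ^ p)⁻¹), ← mul_assoc,
        ← div_eq_mul_inv, le_div_iff₀ (by positivity)]
      linarith
    set K := C * (2 * C₁ * C₂)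
    refine ⟨k, hk, max 1 K * max 1 (1 / (h / 2)), ?_, fun p => ?_⟩
    · exact one_le_mul_of_one_le_of_one_le (le_max_left _ _) (le_max_left _ _)
    · rcases Nat.eq_zero_or_pos p with rfl | hp
      · simp [(hM.1 k hk).2, (hN.1 l hl).2]
      · have hNp := hNpos p
        have hK : K ≤ max 1 K ^ p :=
          (le_max_right 1 K).trans (le_self_pow₀ (le_max_left _ _) hp.ne')
        refine (key p).trans ?_
        rw [mul_pow]
        gcongr
        exact le_max_right _ _
end
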